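/- arXiv:2601.07817 — 2 statements merged into one kernel-verified Lean document; each statement's English description precedes it below -/
import Mathlib

section
/- For every fixed ε > 0 there is a constant C(ε) such that, with the notation of the context, for every admissible pair (q, κ) there exist a subset S₀(q, κ) ⊆ S(q, κ) and a finite collection 𝓛(q, κ) of rank-two sublattices 𝖬 ⊂ ℤ⁴ with #S₀(q, κ) ≤ C(ε)(Y₁Y₂)^{−1/3}Y₃^{−2}B^{2/3+ε} and #𝓛(q, κ) ≤ C(ε)(Y₁Y₂)^{−1/3}Y₃^{−2}B^{2/3+ε}, such that S(q, κ) \ S₀(q, κ) is contained in the union of the lattices 𝖬 ∈ 𝓛(q, κ); every point (x₁, x₂, y₁, y₂) of every 𝖬 ∈ 𝓛(q, κ) satisfies the congruences (c1), (c2), (c3), (c4); each 𝖬 ∈ 𝓛(q, κ) contains at least one point with a₁x₁²y₁³ + a₂x₂²y₂³ ≠ 0; and every nonzero point (x₁, x₂, y₁, y₂) of each 𝖬 has (x₁, x₂) ≠ (0, 0) and (y₁, y₂) ≠ (0, 0). -/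
/-- The set `S₀(B)` of sextuples `(x₁, x₂, x₃, y₁, y₂, y₃)` of positive integers (encoded as a
pair of functions `Fin 3 → ℤ`) such that `Xᵢ/2 < xᵢ ≤ Xᵢ` and `Yᵢ/2 < yᵢ ≤ Yᵢ`, the equation
`a₁x₁²y₁³ + a₂x₂²y₂³ + a₃x₃²y₃³ = 0` holds, `gcd(x₁y₁, x₂y₂, x₃y₃) = 1`,
`gcd(a₁a₂a₃, x₁x₂x₃y₁y₂y₃) = 1`, and `a₁y₁, a₂y₂, a₃y₃` are all squarefree. -/
def S0 (a : Fin 3 → ℤ) (X Y : Fin 3 → ℝ) : Set ((Fin 3 → ℤ) × (Fin 3 → ℤ)) :=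
  {p | (∀ i, 0 < p.1 i) ∧ (∀ i, 0 < p.2 i) ∧
    (∀ i, X i / 2 < (p.1 i : ℝ) ∧ (p.1 i : ℝ) ≤ X i) ∧
    (∀ i, Y i / 2 < (p.2 i : ℝ) ∧ (p.2 i : ℝ) ≤ Y i) ∧
    a 0 * p.1 0 ^ 2 * p.2 0 ^ 3 + a 1 * p.1 1 ^ 2 * p.2 1 ^ 3 +
      a 2 * p.1 2 ^ 2 * p.2 2 ^ 3 = 0 ∧
    Int.gcd (p.1 0 * p.2 0) (Int.gcd (p.1 1 * p.2 1) (p.1 2 * p.2 2)) = 1 ∧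
    Int.gcd (a 0 * a 1 * a 2) (p.1 0 * p.1 1 * p.1 2 * p.2 0 * p.2 1 * p.2 2) = 1 ∧
    (∀ i, Squarefree (a i * p.2 i))}

/-- The set `S(q, κ)` of quadruples `(x₁, x₂, y₁, y₂)` of positive integers satisfying
`x₁y₁ + κx₂y₂ ≡ 0 (mod q)` and such that `(x₁, x₂, x₃, y₁, y₂, q) ∈ S₀(B)` for some positive
integer `x₃`. -/
def SqK (a : Fin 3 → ℤ) (X Y : Fin 3 → ℝ) (q κ : ℤ) : Set (ℤ × ℤ × ℤ × ℤ) :=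
  {t | ∃ x₁ x₂ y₁ y₂ : ℤ, t = (x₁, x₂, y₁, y₂) ∧
    0 < x₁ ∧ 0 < x₂ ∧ 0 < y₁ ∧ 0 < y₂ ∧
    q ∣ x₁ * y₁ + κ * x₂ * y₂ ∧
    ∃ x₃ : ℤ, 0 < x₃ ∧ (![x₁, x₂, x₃], ![y₁, y₂, q]) ∈ S0 a X Y}

/-- The congruences (c1), (c2), (c3), (c4). -/
def Congs (a₁ a₂ q κ x₁ x₂ y₁ y₂ : ℤ) : Prop :=
  (q ∣ a₂ * x₁ - κ ^ 3 * a₁ * x₂) ∧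
  (q ∣ κ ^ 2 * a₁ * y₁ + a₂ * y₂) ∧
  (q ∣ κ ^ 2 * a₁ * x₂ * y₁ + a₂ * x₂ * y₂) ∧
  (q ^ 2 ∣ 2 * a₂ * x₁ * y₁ + κ ^ 3 * a₁ * x₂ * y₁ + 3 * κ * a₂ * x₂ * y₂) ∧
  (q ^ 3 ∣ 5 * κ ^ 2 * a₁ * a₂ * x₁ * y₁ + a₂ ^ 2 * x₁ * y₂ +
    κ ^ 5 * a₁ ^ 2 * x₂ * y₁ + 5 * κ ^ 3 * a₁ * a₂ * x₂ * y₂)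

/-!
The equation makes `a₁x₁²y₁³ + a₂x₂²y₂³` divisible by `q³`. Together with the linear congruence
modulo `q` this forces (c1), and expanding the form to second order around the solutions of (c1)
gives (c2), (c3) and (c4). The last three are linear in the products `xᵢyⱼ`, so the vectors
`(xᵢyⱼ)` lie in a lattice in `ℤ⁴` of index about `q⁶`. Comparing the index with the volume of the
box, the pigeonhole principle in the dual lattice covers the points of this lattice in the box by
`O(H)` hyperplanes, where `H = (Y₁Y₂)^{-1/3} Y₃^{-2} B^{2/3}`.

A hyperplane cuts out a curve of bidegree `(1, 1)` in `ℙ¹ × ℙ¹`. If its determinant `Δ` vanishes,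
the curve is a union of two lines and carries at most two of the points, since a point is determined
by `(x₁, x₂)` or `(y₁, y₂)` alone: the coordinates are small compared with `q³`. Otherwise
`d • (x₁, x₂)` is a fixed linear function of `(y₁, y₂)` for some divisor `d` of `Δ`, and each `d`
gives one lattice of rank two.

On a lattice of rank two the congruences (c2)–(c4) are still quadratic. Write its points as
`u • z + v • e`, where `z` is one of the points to be covered. Since `z` satisfies the congruences,
the value of each form at `u • z + v • e` is congruent to a multiple `v * (b * u + c * v)` of `v`,
so among the points with a given value of `gcd(q³, v)` the congruences become linear, and hence
hold on the lattice that these points span. By the divisor bound each hyperplane is split into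
`O(B^ε)` lattices.
-/

local notation "ℤ⁴" => ℤ × ℤ × ℤ × ℤ

/-! ### The divisor bound -/

section DivisorBound

variable {η : ℝ}

lemma add_one_le_mul_rpow_pow {x : ℝ} (hη : 0 < η) (hx : 2 ≤ x) (v : ℕ) :
    (v + 1 : ℝ) ≤ (1 + 1 / (η * Real.log 2)) * (x ^ η) ^ v := by
  have hlog : 0 < η * Real.log 2 := mul_pos hη (Real.log_pos one_lt_two)
  have hbase : 1 + η * Real.log 2 ≤ x ^ η := calc
    1 + η * Real.log 2 ≤ (2 : ℝ) ^ η := by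
      rw [Real.rpow_def_of_pos two_pos]
      linarith [Real.add_one_le_exp (Real.log 2 * η)]
    _ ≤ x ^ η := Real.rpow_le_rpow two_pos.le hx hη.le
  have hbernoulli : 1 + v * (η * Real.log 2) ≤ (x ^ η) ^ v :=
    (one_add_mul_le_pow (by linarith) v).trans (pow_le_pow_left₀ (by linarith) hbase v)
  calc (v + 1 : ℝ)
      ≤ v + 1 + (1 / (η * Real.log 2) + v * (η * Real.log 2)) :=
        le_add_of_nonneg_right (by positivity)
    _ = (1 + 1 / (η * Real.log 2)) * (1 + v * (η * Real.log 2)) := by field_simp; ring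
    _ ≤ (1 + 1 / (η * Real.log 2)) * (x ^ η) ^ v := by gcongr

lemma add_one_le_rpow_pow {x : ℝ} (hη : 0 < η) (hx : 2 ^ (1 / η) ≤ x) (v : ℕ) :
    (v + 1 : ℝ) ≤ (x ^ η) ^ v := by
  have htwo : 2 ≤ x ^ η := by
    simpa [← Real.rpow_mul, hη.ne'] using Real.rpow_le_rpow (by positivity) hx hη.le
  calc (v + 1 : ℝ) ≤ 2 ^ v := mod_cast Nat.lt_two_pow_self
    _ ≤ (x ^ η) ^ v := by gcongr

lemma rpow_eq_prod_primeFactors (η : ℝ) {n : ℕ} (hn : n ≠ 0) :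
    (n : ℝ) ^ η = ∏ p ∈ n.primeFactors, ((p : ℝ) ^ η) ^ n.factorization p := by
  conv_lhs =>
    rw [← Nat.prod_factorization_pow_eq_self hn, Nat.prod_factorization_eq_prod_primeFactors]
  push_cast
  rw [← Real.finsetProd_rpow _ _ fun p _ => by positivity]
  refine Finset.prod_congr rfl fun p _ => ?_
  exact (Real.rpow_pow_comm p.cast_nonneg η _).symm

lemma exists_card_divisors_le_mul_rpow (hη : 0 < η) :
    ∃ C : ℝ, 1 ≤ C ∧ ∀ n : ℕ, n ≠ 0 → (n.divisors.card : ℝ) ≤ C * (n : ℝ) ^ η := by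
  set K : ℝ := 1 + 1 / (η * Real.log 2)
  set P : ℕ := ⌈(2 : ℝ) ^ (1 / η)⌉₊
  have hK : 1 ≤ K := le_add_of_nonneg_right (by positivity)
  refine ⟨K ^ P, one_le_pow₀ hK, fun n hn => ?_⟩
  have hfactor : ∀ p ∈ n.primeFactors, (n.factorization p + 1 : ℝ) ≤
      (if p < P then K else 1) * ((p : ℝ) ^ η) ^ n.factorization p := by
    intro p hp
    split_ifs with hpP
    · exact add_one_le_mul_rpow_pow hη (mod_cast (Nat.prime_of_mem_primeFactors hp).two_le) _
    · rw [one_mul]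
      exact add_one_le_rpow_pow hη (Nat.ceil_le.mp (not_lt.mp hpP)) _
  have hsmall : ∏ p ∈ n.primeFactors, (if p < P then K else 1) ≤ K ^ P := by
    rw [Finset.prod_ite, Finset.prod_const, Finset.prod_const_one, mul_one]
    refine pow_le_pow_right₀ hK ((Finset.card_le_card fun p hp => ?_).trans_eq
      (Finset.card_range P))
    exact Finset.mem_range.mpr (Finset.mem_filter.mp hp).2
  calc (n.divisors.card : ℝ) = ∏ p ∈ n.primeFactors, (n.factorization p + 1 : ℝ) := by
        rw [Nat.card_divisors hn]; push_cast; rfl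
    _ ≤ ∏ p ∈ n.primeFactors, (if p < P then K else 1) * ((p : ℝ) ^ η) ^ n.factorization p :=
        Finset.prod_le_prod (fun p _ => by positivity) hfactor
    _ = (∏ p ∈ n.primeFactors, if p < P then K else 1) * (n : ℝ) ^ η := by
        rw [Finset.prod_mul_distrib, rpow_eq_prod_primeFactors η hn]
    _ ≤ K ^ P * (n : ℝ) ^ η := by gcongr

end DivisorBound

/-! ### Integer points in boxes and covers by hyperplanes -/

section BoxPoints

variable {ι : Type*} {D : AddSubgroup (ι → ℤ)} {V : ι → ℝ} {T : ℝ}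

/-- The points of a subgroup `D` of `ℤ^ι` in the box `|c j| ≤ T * V j`: the shape `V` is kept
fixed and the box is scaled by `T`. -/
def boxPoints (D : AddSubgroup (ι → ℤ)) (V : ι → ℝ) (T : ℝ) : Set (ι → ℤ) :=
  {c | c ∈ D ∧ ∀ j, |(c j : ℝ)| ≤ T * V j}

lemma boxPoints_mono (hV : ∀ j, 0 ≤ V j) : Monotone (boxPoints D V) :=
  fun _ _ h _ hc => ⟨hc.1, fun j => (hc.2 j).trans (mul_le_mul_of_nonneg_right h (hV j))⟩

lemma sub_mem_boxPoints {c c' : ι → ℤ} (hc : c ∈ boxPoints D V T) (hc' : c' ∈ boxPoints D V T) :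
    c - c' ∈ boxPoints D V (2 * T) := by
  refine ⟨D.sub_mem hc.1 hc'.1, fun j => ?_⟩
  calc |((c - c') j : ℝ)| = |(c j : ℝ) - c' j| := by simp
    _ ≤ |(c j : ℝ)| + |(c' j : ℝ)| := abs_sub _ _
    _ ≤ 2 * T * V j := by linarith [hc.2 j, hc'.2 j]

lemma finite_boxPoints [Finite ι] (D : AddSubgroup (ι → ℤ)) (V : ι → ℝ) (T : ℝ) :
    (boxPoints D V T).Finite := by
  refine (Set.Finite.pi' fun j => Set.finite_Icc (-⌊T * V j⌋) ⌊T * V j⌋).subset fun c hc j => ?_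
  exact abs_le.mp (Int.le_floor.mpr (by simpa using hc.2 j))

lemma card_le_ncard_boxPoints_mul [Finite ι] (hTV : ∀ j, 0 < T * V j) {s : Finset (ι → ℤ)}
    (hs : ∀ c ∈ s, c ∈ D) {t : Finset (ι → ℤ)}
    (ht : ∀ c ∈ s, (fun j => ⌊(c j : ℝ) / (T * V j)⌋) ∈ t) :
    s.card ≤ (boxPoints D V T).ncard * t.card := by
  classical
  refine Finset.card_le_mul_card_image_of_maps_to ht _ fun b _ => ?_
  rcases Finset.eq_empty_or_nonempty
    (s.filter fun c => (fun j => ⌊(c j : ℝ) / (T * V j)⌋) = b) with hempty | ⟨c₀, hc₀⟩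
  · simp [hempty]
  rw [← Set.ncard_coe_finset]
  refine Set.ncard_le_ncard_of_injOn (· - c₀) (fun c hc => ?_) (sub_left_injective.injOn)
    (finite_boxPoints D V T)
  simp only [Finset.coe_filter, Finset.mem_filter, Set.mem_ofPred_eq] at hc hc₀
  refine ⟨D.sub_mem (hs c hc.1) (hs c₀ hc₀.1), fun j => ?_⟩
  have hfloor := Int.abs_sub_lt_one_of_floor_eq_floor (congrFun (hc.2.trans hc₀.2.symm) j)
  rw [← sub_div, abs_div, abs_of_pos (hTV j), div_lt_one (hTV j)] at hfloor
  simpa using hfloor.le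

variable [Fintype ι]

lemma ncard_boxPoints_two_mul_le (hTV : ∀ j, 0 < T * V j) :
    (boxPoints D V (2 * T)).ncard ≤ 5 ^ Fintype.card ι * (boxPoints D V T).ncard := by
  classical
  have hfin := finite_boxPoints D V (2 * T)
  have hcard := card_le_ncard_boxPoints_mul hTV (s := hfin.toFinset)
    (t := Fintype.piFinset fun _ => Finset.Icc (-2) 2) (fun c hc => (hfin.mem_toFinset.mp hc).1)
    fun c hc => Fintype.mem_piFinset.mpr fun j => ?_
  · rwa [← Set.ncard_eq_toFinset_card _ hfin, Fintype.card_piFinset, Finset.prod_const,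
      Finset.card_univ, mul_comm (Set.ncard _)] at hcard
  · have habs : |(c j : ℝ) / (T * V j)| ≤ 2 := by
      rw [abs_div, abs_of_pos (hTV j), div_le_iff₀ (hTV j), ← mul_assoc]
      exact (hfin.mem_toFinset.mp hc).2 j
    have hfloor := Int.floor_le_floor (abs_le.mp habs).2
    exact Finset.mem_Icc.mpr ⟨Int.le_floor.mpr (mod_cast (abs_le.mp habs).1), by simpa using hfloor⟩

lemma card_mul_prod_le_ncard_boxPoints {R : ℤ} (hTV : ∀ j, 0 < T * V j)
    (hTR : ∀ j, T * V j ≤ R) {s : Finset (ι → ℤ)} (hs : ∀ c ∈ s, c ∈ D)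
    (hsR : ∀ c ∈ s, ∀ j, c j ∈ Set.Ico 0 R) :
    s.card * ∏ j, (T * V j) ≤ (boxPoints D V T).ncard * (2 * R : ℝ) ^ Fintype.card ι := by
  classical
  have hcard := card_le_ncard_boxPoints_mul hTV hs
    (t := Fintype.piFinset fun j => Finset.Icc 0 ⌊R / (T * V j)⌋)
    fun c hc => Fintype.mem_piFinset.mpr fun j => Finset.mem_Icc.mpr ?_
  · have hside : ∀ j, (Finset.Icc 0 ⌊R / (T * V j)⌋).card * (T * V j) ≤ 2 * R := by
      intro j
      have hone : 1 ≤ R / (T * V j) := (one_le_div (hTV j)).mpr (hTR j)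
      have hcast : ((Finset.Icc 0 ⌊R / (T * V j)⌋).card : ℝ) = ⌊R / (T * V j)⌋ + 1 := by
        rw [Int.card_Icc, sub_zero]
        have := Int.floor_nonneg.mpr (zero_le_one.trans hone)
        exact_mod_cast Int.toNat_of_nonneg (by linarith)
      rw [hcast, ← le_div_iff₀ (hTV j), mul_div_assoc]
      linarith [Int.floor_le (R / (T * V j))]
    calc s.card * ∏ j, (T * V j)
        ≤ ((boxPoints D V T).ncard * ∏ j, ((Finset.Icc 0 ⌊R / (T * V j)⌋).card : ℝ)) *
            ∏ j, (T * V j) := by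
          gcongr
          · exact Finset.prod_nonneg fun j _ => (hTV j).le
          · rw [Fintype.card_piFinset] at hcard
            exact_mod_cast hcard
      _ = (boxPoints D V T).ncard * ∏ j, ((Finset.Icc 0 ⌊R / (T * V j)⌋).card * (T * V j)) := by
          rw [mul_assoc, ← Finset.prod_mul_distrib]
      _ ≤ (boxPoints D V T).ncard * (2 * R : ℝ) ^ Fintype.card ι := by
          gcongr
          rw [← Finset.card_univ, ← Finset.prod_const]
          exact Finset.prod_le_prod (fun j _ => by have := hTV j; positivity) fun j _ => hside j
  · obtain ⟨hnonneg, hlt⟩ := hsR c hc j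
    have hle : (c j : ℝ) ≤ R := mod_cast hlt.le
    exact ⟨Int.floor_nonneg.mpr (div_nonneg (mod_cast hnonneg) (hTV j).le),
      Int.floor_le_floor (div_le_div_of_nonneg_right hle (hTV j).le)⟩

lemma abs_dotProduct_le_of_mem_boxPoints {R : ℤ} (hT : 0 ≤ T) {c w : ι → ℤ}
    (hc : c ∈ boxPoints D V T) (hw : ∀ j, |(w j : ℝ)| * V j ≤ R) :
    |((c ⬝ᵥ w : ℤ) : ℝ)| ≤ Fintype.card ι * T * R := by
  have hterm : ∀ j, |(c j : ℝ) * w j| ≤ T * R := fun j => calc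
    |(c j : ℝ) * w j| ≤ T * V j * |(w j : ℝ)| := by rw [abs_mul]; gcongr; exact hc.2 j
    _ = T * (|(w j : ℝ)| * V j) := by ring
    _ ≤ T * R := by gcongr; exact hw j
  calc |((c ⬝ᵥ w : ℤ) : ℝ)| = |∑ j, (c j : ℝ) * w j| := by simp [dotProduct]
    _ ≤ ∑ j, |(c j : ℝ) * w j| := Finset.abs_sum_le_sum_abs _ _
    _ ≤ ∑ _j : ι, T * R := Finset.sum_le_sum fun j _ => hterm j
    _ = Fintype.card ι * T * R := by simp [mul_assoc]

/-- The dual of a set `Λ` of integer vectors, scaled by `R` so as to consist of integer vectors. -/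
def scaledDual (R : ℤ) (Λ : Set (ι → ℤ)) : AddSubgroup (ι → ℤ) where
  carrier := {c | ∀ w ∈ Λ, R ∣ c ⬝ᵥ w}
  zero_mem' w _ := by simp
  add_mem' hc hc' w hw := by rw [add_dotProduct]; exact dvd_add (hc w hw) (hc' w hw)
  neg_mem' hc w hw := by rw [neg_dotProduct]; exact (hc w hw).neg_right

variable {R : ℤ} {Λ : Set (ι → ℤ)}

-- Pigeonhole: the products `c ⬝ᵥ w` are multiples of `R` in an interval of length `2 n T R`.
lemma exists_orthogonal_of_lt_ncard_boxPoints (hR : 0 < R) (hT : 0 ≤ T)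
    (hcard : 2 * Fintype.card ι * T + 1 < (boxPoints (scaledDual R Λ) V T).ncard)
    {w : ι → ℤ} (hw : w ∈ Λ) (hwV : ∀ j, |(w j : ℝ)| * V j ≤ R) :
    ∃ c ∈ boxPoints (scaledDual R Λ) V (2 * T), c ≠ 0 ∧ c ⬝ᵥ w = 0 := by
  set m : ℤ := ⌊Fintype.card ι * T⌋
  have hfin := finite_boxPoints (scaledDual R Λ) V T
  have hquot : ∀ c ∈ boxPoints (scaledDual R Λ) V T, ∃ k ∈ Set.Icc (-m) m, c ⬝ᵥ w = R * k := by
    intro c hc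
    obtain ⟨k, hk⟩ := hc.1 w hw
    have hRk : |(k : ℝ)| * R ≤ Fintype.card ι * T * R := by
      have := abs_dotProduct_le_of_mem_boxPoints hT hc hwV
      rwa [hk, Int.cast_mul, abs_mul, abs_of_pos (a := (R : ℝ)) (mod_cast hR), mul_comm] at this
    have hkm : |k| ≤ m :=
      Int.le_floor.mpr (by simpa using le_of_mul_le_mul_right hRk (mod_cast hR))
    exact ⟨k, abs_le.mp hkm, hk⟩
  have hlt : (Finset.Icc (-m) m).card < hfin.toFinset.card := by
    rw [← Set.ncard_eq_toFinset_card _ hfin, Int.card_Icc]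
    have hm : 0 ≤ m := Int.floor_nonneg.mpr (by positivity)
    have hmT : (m : ℝ) ≤ Fintype.card ι * T := Int.floor_le _
    have : ((m + 1 - -m : ℤ) : ℝ) < (boxPoints (scaledDual R Λ) V T).ncard := by
      push_cast; linarith
    have : m + 1 - -m < (boxPoints (scaledDual R Λ) V T).ncard := mod_cast this
    omega
  obtain ⟨c, hc, c', hc', hne, heq⟩ := Finset.exists_ne_map_eq_of_card_lt_of_maps_to hlt
    (f := fun c => c ⬝ᵥ w / R) fun c hc => by
      obtain ⟨k, hkm, hk⟩ := hquot c (hfin.mem_toFinset.mp hc)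
      simpa [hk, Int.mul_ediv_cancel_left _ hR.ne'] using hkm
  rw [hfin.mem_toFinset] at hc hc'
  refine ⟨c - c', sub_mem_boxPoints hc hc', sub_ne_zero.mpr hne, ?_⟩
  rw [sub_dotProduct, ← Int.ediv_mul_cancel (hc.1 w hw), ← Int.ediv_mul_cancel (hc'.1 w hw)]
  rw [heq, sub_self]

lemma exists_hyperplane_cover_of_ncard_lt (hR : 0 < R) (hV : ∀ j, 0 < V j) (hT : 0 < T) {N : ℕ}
    (hsmall : (boxPoints (scaledDual R Λ) V T).ncard ≤ N)
    (hlarge : 2 * Fintype.card ι * (2 * T) + 1 < (boxPoints (scaledDual R Λ) V (2 * T)).ncard) :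
    ∃ 𝓗 : Finset (ι → ℤ), 𝓗.card ≤ 25 ^ Fintype.card ι * N ∧
      (∀ c ∈ 𝓗, c ≠ 0 ∧ c ∈ boxPoints (scaledDual R Λ) V (2 * (2 * T))) ∧
      ∀ w ∈ Λ, (∀ j, |(w j : ℝ)| * V j ≤ R) → ∃ c ∈ 𝓗, c ⬝ᵥ w = 0 := by
  classical
  have hfin := finite_boxPoints (scaledDual R Λ) V (2 * (2 * T))
  refine ⟨hfin.toFinset.erase 0, ?_, fun c hc => ?_, fun w hw hwV => ?_⟩
  · calc (hfin.toFinset.erase 0).card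
        ≤ (boxPoints (scaledDual R Λ) V (2 * (2 * T))).ncard := by
          rw [Set.ncard_eq_toFinset_card _ hfin]
          exact Finset.card_le_card (Finset.erase_subset _ _)
      _ ≤ 5 ^ Fintype.card ι * (5 ^ Fintype.card ι * (boxPoints (scaledDual R Λ) V T).ncard) :=
          (ncard_boxPoints_two_mul_le fun j => by have := hV j; positivity).trans
            (Nat.mul_le_mul_left _ (ncard_boxPoints_two_mul_le fun j => mul_pos hT (hV j)))
      _ = 25 ^ Fintype.card ι * (boxPoints (scaledDual R Λ) V T).ncard := by
          rw [← mul_assoc, ← mul_pow]; norm_num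
      _ ≤ 25 ^ Fintype.card ι * N := Nat.mul_le_mul_left _ hsmall
  · obtain ⟨hc0, hc⟩ := Finset.mem_erase.mp hc
    exact ⟨hc0, hfin.mem_toFinset.mp hc⟩
  · obtain ⟨c, hc, hc0, hcw⟩ :=
      exists_orthogonal_of_lt_ncard_boxPoints hR (by positivity) hlarge hw hwV
    exact ⟨c, Finset.mem_erase.mpr ⟨hc0, hfin.mem_toFinset.mpr hc⟩, hcw⟩

variable [Nonempty ι]

lemma exists_singleton_hyperplane_cover (hR : 0 < R)
    (hcard : 1 < (boxPoints (scaledDual R Λ) V (1 / (2 * Fintype.card ι))).ncard) :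
    ∃ c ∈ boxPoints (scaledDual R Λ) V (1 / (2 * Fintype.card ι)), c ≠ 0 ∧
      ∀ w ∈ Λ, (∀ j, |(w j : ℝ)| * V j ≤ R) → c ⬝ᵥ w = 0 := by
  obtain ⟨c, hc, hc0⟩ := Set.exists_ne_of_one_lt_ncard hcard 0
  refine ⟨c, hc, hc0, fun w hw hwV => Int.eq_zero_of_abs_lt_dvd (hc.1 w hw) ?_⟩
  have hR' : (0 : ℝ) < R := mod_cast hR
  have : |((c ⬝ᵥ w : ℤ) : ℝ)| < R := calc
    |((c ⬝ᵥ w : ℤ) : ℝ)| ≤ Fintype.card ι * (1 / (2 * Fintype.card ι)) * R :=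
      abs_dotProduct_le_of_mem_boxPoints (by positivity) hc hwV
    _ = R / 2 := by field_simp
    _ < R := half_lt_self hR'
  exact_mod_cast this

-- The relevant scale is the least one at which the box is large: half of it contains few points, so
-- by doubling so does the box of differences that serves as the cover.
lemma exists_hyperplane_cover (hR : 0 < R) (hV : ∀ j, 0 < V j) {k : ℕ}
    (hlarge : (2 : ℝ) ^ k + 1 <
      (boxPoints (scaledDual R Λ) V (2 ^ k / (2 * Fintype.card ι))).ncard) :
    ∃ 𝓗 : Finset (ι → ℤ), 𝓗.card ≤ 25 ^ Fintype.card ι * 2 ^ k ∧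
      (∀ c ∈ 𝓗, c ≠ 0 ∧ c ∈ boxPoints (scaledDual R Λ) V (2 ^ k / Fintype.card ι)) ∧
      ∀ w ∈ Λ, (∀ j, |(w j : ℝ)| * V j ≤ R) → ∃ c ∈ 𝓗, c ⬝ᵥ w = 0 := by
  have hn : (0 : ℝ) < Fintype.card ι := mod_cast Fintype.card_pos
  have hmono := boxPoints_mono (D := scaledDual R Λ) fun j => (hV j).le
  induction k with
  | zero =>
    rw [pow_zero] at hlarge
    have hone := (lt_add_of_pos_left (1 : ℝ) one_pos).trans hlarge
    obtain ⟨c, hc, hc0, hcover⟩ := exists_singleton_hyperplane_cover hR (Nat.one_lt_cast.mp hone)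
    refine ⟨{c}, ?_, ?_, fun w hw hwV => ⟨c, by simp, hcover w hw hwV⟩⟩
    · simp [Nat.one_le_iff_ne_zero]
    · simp only [Finset.mem_singleton, forall_eq, pow_zero]
      refine ⟨hc0, hmono ?_ hc⟩
      gcongr
      linarith
  | succ l ih =>
    by_cases hl : (2 : ℝ) ^ l + 1 <
        (boxPoints (scaledDual R Λ) V (2 ^ l / (2 * Fintype.card ι))).ncard
    · obtain ⟨𝓗, hcard, hbox, hcover⟩ := ih hl
      refine ⟨𝓗, hcard.trans (by gcongr <;> lia), fun c hc => ?_, hcover⟩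
      refine ⟨(hbox c hc).1, hmono ?_ (hbox c hc).2⟩
      gcongr
      exacts [one_le_two, l.le_succ]
    · set T : ℝ := 2 ^ l / (2 * Fintype.card ι)
      have hsmall : (boxPoints (scaledDual R Λ) V T).ncard ≤ 2 ^ (l + 1) := by
        have : (boxPoints (scaledDual R Λ) V T).ncard ≤ 2 ^ l + 1 := by
          exact_mod_cast not_lt.mp hl
        rw [pow_succ]
        linarith [Nat.one_le_two_pow (n := l)]
      have hT2 : (2 : ℝ) ^ (l + 1) / (2 * Fintype.card ι) = 2 * T := by rw [pow_succ]; ring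
      have hT4 : (2 : ℝ) ^ (l + 1) / Fintype.card ι = 2 * (2 * T) := by rw [← hT2]; ring
      have hpow : (2 : ℝ) ^ (l + 1) = 2 * Fintype.card ι * (2 * T) := by rw [← hT2]; field_simp
      rw [hT2, hpow] at hlarge
      rw [hT4]
      exact exists_hyperplane_cover_of_ncard_lt hR hV (by positivity) hsmall hlarge

end BoxPoints

/-! ### Congruences satisfied by the points -/

section Congruences

variable {a₁ a₂ q κ x₁ x₂ y₁ y₂ : ℤ}

lemma dvd_linear_y_of_dvd_form (hx₂ : IsCoprime q x₂) (hy₂ : IsCoprime q y₂)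
    (hline : q ∣ x₁ * y₁ + κ * x₂ * y₂)
    (hform : q ∣ a₁ * x₁ ^ 2 * y₁ ^ 3 + a₂ * x₂ ^ 2 * y₂ ^ 3) :
    q ∣ κ ^ 2 * a₁ * y₁ + a₂ * y₂ := by
  refine (hx₂.pow_right.mul_right hy₂.pow_right : IsCoprime q (x₂ ^ 2 * y₂ ^ 2)).dvd_of_dvd_mul_left
    ?_
  obtain ⟨m, hm⟩ := hline
  obtain ⟨n, hn⟩ := hform
  refine ⟨n - m * a₁ * y₁ * (x₁ * y₁ - κ * x₂ * y₂), ?_⟩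
  linear_combination hn - a₁ * y₁ * (x₁ * y₁ - κ * x₂ * y₂) * hm

lemma dvd_linear_x_of_dvd_linear_y (hy₁ : IsCoprime q y₁)
    (hline : q ∣ x₁ * y₁ + κ * x₂ * y₂) (hy : q ∣ κ ^ 2 * a₁ * y₁ + a₂ * y₂) :
    q ∣ a₂ * x₁ - κ ^ 3 * a₁ * x₂ := by
  refine hy₁.dvd_of_dvd_mul_left ?_
  obtain ⟨m, hm⟩ := hline
  obtain ⟨n, hn⟩ := hy
  exact ⟨a₂ * m - κ * x₂ * n, by linear_combination a₂ * hm - κ * x₂ * hn⟩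

-- Second-order expansion of the form around the solutions of the two linear congruences.
lemma sq_dvd_expansion_of_cube_dvd_form {s t : ℤ} (hq : q ≠ 0) (ha₁ : IsCoprime q a₁)
    (hy₁ : IsCoprime q y₁) (hs : a₂ * x₁ - κ ^ 3 * a₁ * x₂ = q * s)
    (ht : κ ^ 2 * a₁ * y₁ + a₂ * y₂ = q * t)
    (hform : q ^ 3 ∣ a₁ * x₁ ^ 2 * y₁ ^ 3 + a₂ * x₂ ^ 2 * y₂ ^ 3) :
    q ^ 2 ∣ κ ^ 3 * a₁ * x₂ * y₁ * (2 * s * y₁ + 3 * κ * t * x₂) +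
      q * (y₁ ^ 2 * s ^ 2 - 3 * κ ^ 2 * x₂ ^ 2 * t ^ 2) := by
  have hcop : IsCoprime (q ^ 2) (a₁ * y₁) := (ha₁.mul_right hy₁).pow_left
  refine hcop.dvd_of_dvd_mul_left ?_
  obtain ⟨n, hn⟩ := hform
  refine ⟨a₂ ^ 2 * n - x₂ ^ 2 * t ^ 3, mul_left_cancel₀ hq ?_⟩
  have hx : a₂ * x₁ = κ ^ 3 * a₁ * x₂ + q * s := by linear_combination hs
  have hy : a₂ * y₂ = -(κ ^ 2 * a₁ * y₁) + q * t := by linear_combination ht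
  have hscaled : a₁ * (a₂ * x₁) ^ 2 * y₁ ^ 3 + x₂ ^ 2 * (a₂ * y₂) ^ 3 = q ^ 3 * (a₂ ^ 2 * n) := by
    linear_combination a₂ ^ 2 * hn
  rw [hx, hy] at hscaled
  linear_combination hscaled

lemma congs_of_cube_dvd_form (hq : q ≠ 0) (ha₁ : IsCoprime q a₁) (hκ : IsCoprime q κ)
    (hx₂ : IsCoprime q x₂) (hy₁ : IsCoprime q y₁) (hy₂ : IsCoprime q y₂)
    (hline : q ∣ x₁ * y₁ + κ * x₂ * y₂)
    (hform : q ^ 3 ∣ a₁ * x₁ ^ 2 * y₁ ^ 3 + a₂ * x₂ ^ 2 * y₂ ^ 3) :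
    Congs a₁ a₂ q κ x₁ x₂ y₁ y₂ := by
  have hy := dvd_linear_y_of_dvd_form hx₂ hy₂ hline ((dvd_pow_self q three_ne_zero).trans hform)
  obtain ⟨s, hs⟩ := dvd_linear_x_of_dvd_linear_y hy₁ hline hy
  obtain ⟨t, ht⟩ := hy
  obtain ⟨n, hn⟩ := sq_dvd_expansion_of_cube_dvd_form hq ha₁ hy₁ hs ht hform
  obtain ⟨m, hm⟩ : q ∣ 2 * s * y₁ + 3 * κ * t * x₂ := by
    have hcop : IsCoprime q (κ ^ 3 * a₁ * x₂ * y₁) :=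
      ((hκ.pow_right.mul_right ha₁).mul_right hx₂).mul_right hy₁
    refine hcop.dvd_of_dvd_mul_left ⟨q * n - (y₁ ^ 2 * s ^ 2 - 3 * κ ^ 2 * x₂ ^ 2 * t ^ 2), ?_⟩
    linear_combination hn
  obtain ⟨l, hl⟩ : q ^ 2 ∣ 2 * κ ^ 2 * a₁ * (2 * s * y₁ + 3 * κ * t * x₂) + q * s * t := by
    have hcop : IsCoprime (q ^ 2) (κ * x₂ * y₁) := ((hκ.mul_right hx₂).mul_right hy₁).pow_left
    refine hcop.dvd_of_dvd_mul_left ⟨2 * n - m * (y₁ * s - 2 * κ * x₂ * t), ?_⟩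
    linear_combination 2 * hn - q * (y₁ * s - 2 * κ * x₂ * t) * hm
  refine ⟨⟨s, hs⟩, ⟨t, ht⟩, ⟨x₂ * t, by linear_combination x₂ * ht⟩, ⟨m, ?_⟩, ⟨l, ?_⟩⟩
  · linear_combination q * hm + 2 * y₁ * hs + 3 * κ * x₂ * ht
  · linear_combination q * hl + (5 * κ ^ 2 * a₁ * y₁ + a₂ * y₂) * hs +
      (6 * κ ^ 3 * a₁ * x₂ + q * s) * ht

end Congruences

/-! ### Primitive points -/

/-- The arithmetic conditions on a point `(x₁, x₂, y₁, y₂)` of `S(q, κ)`, with the third variables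
eliminated: the equation survives as a congruence modulo `q³`, and the conditions on greatest common
divisors as the coprimality of `x₁y₁` and `x₂y₂`. -/
structure IsPrimitivePoint (a₁ a₂ q κ x₁ x₂ y₁ y₂ : ℤ) : Prop where
  x₁_pos : 0 < x₁
  x₂_pos : 0 < x₂
  y₁_pos : 0 < y₁
  y₂_pos : 0 < y₂
  isCoprime : IsCoprime (x₁ * y₁) (x₂ * y₂)
  dvd_line : q ∣ x₁ * y₁ + κ * x₂ * y₂
  cube_dvd_form : q ^ 3 ∣ a₁ * x₁ ^ 2 * y₁ ^ 3 + a₂ * x₂ ^ 2 * y₂ ^ 3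
  form_ne_zero : a₁ * x₁ ^ 2 * y₁ ^ 3 + a₂ * x₂ ^ 2 * y₂ ^ 3 ≠ 0

namespace IsPrimitivePoint

variable {a₁ a₂ q κ x₁ x₂ y₁ y₂ : ℤ}

lemma isCoprime_x (h : IsPrimitivePoint a₁ a₂ q κ x₁ x₂ y₁ y₂) : IsCoprime x₁ x₂ :=
  h.isCoprime.of_mul_left_left.of_mul_right_left

lemma isCoprime_y (h : IsPrimitivePoint a₁ a₂ q κ x₁ x₂ y₁ y₂) : IsCoprime y₁ y₂ :=
  h.isCoprime.of_mul_left_right.of_mul_right_right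

lemma isCoprime_mul₂ (h : IsPrimitivePoint a₁ a₂ q κ x₁ x₂ y₁ y₂) : IsCoprime q (x₂ * y₂) := by
  obtain ⟨u, v, huv⟩ := h.isCoprime
  obtain ⟨m, hm⟩ := h.dvd_line
  exact ⟨u * m, v - u * κ, by linear_combination huv - u * hm⟩

lemma isCoprime_mul₁ (h : IsPrimitivePoint a₁ a₂ q κ x₁ x₂ y₁ y₂) (hκ : IsCoprime q κ) :
    IsCoprime q (x₁ * y₁) := by
  obtain ⟨u, v, huv⟩ := hκ.mul_right h.isCoprime_mul₂
  obtain ⟨m, hm⟩ := h.dvd_line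
  exact ⟨u + v * m, -v, by linear_combination huv - v * hm⟩

lemma congs (h : IsPrimitivePoint a₁ a₂ q κ x₁ x₂ y₁ y₂) (hq : q ≠ 0) (ha₁ : IsCoprime q a₁)
    (hκ : IsCoprime q κ) : Congs a₁ a₂ q κ x₁ x₂ y₁ y₂ :=
  congs_of_cube_dvd_form hq ha₁ hκ h.isCoprime_mul₂.of_mul_right_left
    (h.isCoprime_mul₁ hκ).of_mul_right_right h.isCoprime_mul₂.of_mul_right_right
    h.dvd_line h.cube_dvd_form

end IsPrimitivePoint

/-- The primitive points in the box `x₁ ≤ X₁, x₂ ≤ X₂, y₁ ≤ Y₁, y₂ ≤ Y₂`. -/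
def primitivePoints (a₁ a₂ q κ : ℤ) (X₁ X₂ Y₁ Y₂ : ℝ) : Set ℤ⁴ :=
  {P | IsPrimitivePoint a₁ a₂ q κ P.1 P.2.1 P.2.2.1 P.2.2.2 ∧
    P.1 ≤ X₁ ∧ P.2.1 ≤ X₂ ∧ P.2.2.1 ≤ Y₁ ∧ P.2.2.2 ≤ Y₂}

section SqK

variable {a : Fin 3 → ℤ} {X Y : Fin 3 → ℝ} {q κ x₁ x₂ x₃ y₁ y₂ y₃ : ℤ}

lemma isCoprime_mul_of_mem_S0 (h : (![x₁, x₂, x₃], ![y₁, y₂, y₃]) ∈ S0 a X Y) :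
    IsCoprime (x₁ * y₁) (x₂ * y₂) := by
  obtain ⟨hx, hy, -, -, heq, hgcd, hgcda, -⟩ := h
  have hx₁ := hx 0
  have hy₁ := hy 0
  simp only [Matrix.cons_val_zero, Matrix.cons_val_one, Matrix.cons_val] at heq hgcd hgcda hx₁ hy₁
  refine isCoprime_of_prime_dvd (fun h0 => (mul_pos hx₁ hy₁).ne' h0.1) fun p hp h₁ h₂ => ?_
  have h₃ : p ∣ a 2 * x₃ ^ 2 * y₃ ^ 3 := by
    obtain ⟨m, hm⟩ := h₁
    obtain ⟨n, hn⟩ := h₂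
    refine ⟨-(a 0 * m * x₁ * y₁ ^ 2 + a 1 * n * x₂ * y₂ ^ 2), ?_⟩
    linear_combination heq - a 0 * x₁ * y₁ ^ 2 * hm - a 1 * x₂ * y₂ ^ 2 * hn
  have not_dvd_third : ¬ p ∣ x₃ * y₃ := fun h₃ => by
    have h := Int.dvd_coe_gcd h₁ (Int.dvd_coe_gcd h₂ h₃)
    rw [hgcd] at h
    exact hp.not_isUnit (isUnit_of_dvd_one (mod_cast h))
  have not_dvd_coeff : ¬ p ∣ a 2 := fun ha => by
    have hall : p ∣ x₁ * x₂ * x₃ * y₁ * y₂ * y₃ :=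
      (h₁.mul_right (x₂ * x₃ * y₂ * y₃)).trans (dvd_of_eq (by ring))
    have h := Int.dvd_coe_gcd (ha.mul_left (a 0 * a 1)) hall
    rw [hgcda] at h
    exact hp.not_isUnit (isUnit_of_dvd_one (mod_cast h))
  rcases hp.dvd_or_dvd h₃ with h | h
  · rcases hp.dvd_or_dvd h with h | h
    · exact not_dvd_coeff h
    · exact not_dvd_third ((hp.dvd_of_dvd_pow h).mul_right _)
  · exact not_dvd_third ((hp.dvd_of_dvd_pow h).mul_left _)

lemma SqK_subset_primitivePoints (ha : a 2 ≠ 0) :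
    SqK a X Y q κ ⊆ primitivePoints (a 0) (a 1) q κ (X 0) (X 1) (Y 0) (Y 1) := by
  rintro _ ⟨x₁, x₂, y₁, y₂, rfl, hx₁, hx₂, hy₁, hy₂, hline, x₃, hx₃, hS⟩
  have hcop := isCoprime_mul_of_mem_S0 hS
  obtain ⟨-, hy, hX, hY, heq, -⟩ := hS
  have hq : 0 < q := hy 2
  simp only [Matrix.cons_val_zero, Matrix.cons_val_one, Matrix.cons_val] at heq
  refine ⟨⟨hx₁, hx₂, hy₁, hy₂, hcop, hline, ⟨-(a 2 * x₃ ^ 2), by linear_combination heq⟩,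
    fun hzero => ?_⟩, (hX 0).2, (hX 1).2, (hY 0).2, (hY 1).2⟩
  have hthird : a 2 * x₃ ^ 2 * q ^ 3 ≠ 0 := by positivity
  exact hthird (by linear_combination heq - hzero)

end SqK

/-! ### Primitive points with a common pair of coordinates -/

section Uniqueness

lemma cube_dvd_sq_mul_sub {q A B : ℤ} {n : ℕ} (hB : IsCoprime q B) (hdvd : q ∣ A - B)
    (hpow : q ^ 3 ∣ A ^ n - B ^ n) : q ^ 3 ∣ n ^ 2 * (A - B) := by
  obtain ⟨D, hD⟩ := hdvd
  obtain ⟨k, hk⟩ := Polynomial.powAddExpansion B (q * D) n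
  obtain ⟨m, hm⟩ := hpow
  rw [show A = B + q * D by linear_combination hD, hk] at hm
  obtain ⟨l, hl⟩ : q ^ 2 ∣ n * (q * D) := by
    refine (hB.pow (m := 2) (n := n - 1)).dvd_of_dvd_mul_left ⟨q * m - k * D ^ 2, ?_⟩
    linear_combination hm
  refine (hB.pow (m := 3) (n := n - 1)).dvd_of_dvd_mul_left ⟨n * m - k * l * D, ?_⟩
  linear_combination n * hm + B ^ (n - 1) * n ^ 2 * hD - k * D * q * hl

lemma eq_and_eq_of_isCoprime_of_mul_eq_mul {u₁ u₂ v₁ v₂ : ℤ} (hu : IsCoprime u₁ u₂)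
    (hv : IsCoprime v₁ v₂) (hu₂ : 0 < u₂) (hv₂ : 0 < v₂) (h : u₁ * v₂ = u₂ * v₁) :
    u₁ = v₁ ∧ u₂ = v₂ := by
  refine Rat.div_int_inj hu₂ hv₂ (Int.isCoprime_iff_nat_coprime.mp hu)
    (Int.isCoprime_iff_nat_coprime.mp hv) ?_
  rw [div_eq_div_iff (by positivity) (by positivity), mul_comm (v₁ : ℚ)]
  exact_mod_cast h

lemma eq_and_eq_of_cube_dvd {q u₁ u₂ v₁ v₂ : ℤ} {U₁ U₂ : ℝ} {n : ℕ} (hn : n ≠ 0)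
    (hu : IsCoprime u₁ u₂) (hv : IsCoprime v₁ v₂) (hu₁ : 0 < u₁) (hu₂ : 0 < u₂) (hv₁ : 0 < v₁)
    (hv₂ : 0 < v₂) (hu₁U : u₁ ≤ U₁) (hu₂U : u₂ ≤ U₂) (hv₁U : v₁ ≤ U₁) (hv₂U : v₂ ≤ U₂)
    (hU : n ^ 2 * (U₁ * U₂) < (q : ℝ) ^ 3) (hq : IsCoprime q (u₂ * v₁))
    (hdvd : q ∣ u₁ * v₂ - u₂ * v₁) (hpow : q ^ 3 ∣ (u₁ * v₂) ^ n - (u₂ * v₁) ^ n) :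
    u₁ = v₁ ∧ u₂ = v₂ := by
  have hU₁ : 0 ≤ U₁ := (Int.cast_nonneg hu₁.le).trans hu₁U
  have h₁ : (u₁ * v₂ : ℝ) ≤ U₁ * U₂ := mul_le_mul hu₁U hv₂U (Int.cast_nonneg hv₂.le) hU₁
  have h₂ : (u₂ * v₁ : ℝ) ≤ U₁ * U₂ := by
    rw [mul_comm]; exact mul_le_mul hv₁U hu₂U (Int.cast_nonneg hu₂.le) hU₁
  have hsmall : |((n ^ 2 * (u₁ * v₂ - u₂ * v₁) : ℤ) : ℝ)| < (q : ℝ) ^ 3 := calc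
    |((n ^ 2 * (u₁ * v₂ - u₂ * v₁) : ℤ) : ℝ)| = n ^ 2 * |(u₁ * v₂ : ℝ) - u₂ * v₁| := by
      push_cast; rw [abs_mul, abs_of_nonneg (by positivity)]
    _ ≤ n ^ 2 * (U₁ * U₂) := by
      gcongr
      exact abs_sub_le_of_nonneg_of_le (by positivity) h₁ (by positivity) h₂
    _ < (q : ℝ) ^ 3 := hU
  have hzero := Int.eq_zero_of_abs_lt_dvd (cube_dvd_sq_mul_sub hq hdvd hpow) (mod_cast hsmall)
  refine eq_and_eq_of_isCoprime_of_mul_eq_mul hu hv hu₂ hv₂ (sub_eq_zero.mp ?_)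
  exact (mul_eq_zero.mp hzero).resolve_left (by simp [hn])

variable {a₁ a₂ q κ : ℤ} {X₁ X₂ Y₁ Y₂ : ℝ} {P P' : ℤ⁴}

lemma eq_of_mem_primitivePoints_of_x_eq (ha : IsCoprime q (a₁ * a₂)) (hκ : IsCoprime q κ)
    (hY : 9 * (Y₁ * Y₂) < (q : ℝ) ^ 3) (hP : P ∈ primitivePoints a₁ a₂ q κ X₁ X₂ Y₁ Y₂)
    (hP' : P' ∈ primitivePoints a₁ a₂ q κ X₁ X₂ Y₁ Y₂) (hx₁ : P.1 = P'.1)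
    (hx₂ : P.2.1 = P'.2.1) : P = P' := by
  obtain ⟨x₁, x₂, y₁, y₂⟩ := P
  obtain ⟨_, _, z₁, z₂⟩ := P'
  obtain ⟨rfl, rfl⟩ : x₁ = _ ∧ x₂ = _ := ⟨hx₁, hx₂⟩
  obtain ⟨hP, -, -, hy₁, hy₂⟩ := hP
  obtain ⟨hP', -, -, hz₁, hz₂⟩ := hP'
  have hq : q ≠ 0 := by
    rintro rfl
    have h1 : (0 : ℝ) < y₁ := mod_cast hP.y₁_pos
    have h2 : (0 : ℝ) < y₂ := mod_cast hP.y₂_pos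
    have : 0 < Y₁ * Y₂ := mul_pos (h1.trans_le hy₁) (h2.trans_le hy₂)
    norm_num at hY
    linarith
  have ha₂ := ha.of_mul_right_right
  have hcop : IsCoprime q (y₂ * z₁) :=
    hP.isCoprime_mul₂.of_mul_right_right.mul_right (hP'.isCoprime_mul₁ hκ).of_mul_right_right
  have hdvd : q ∣ y₁ * z₂ - y₂ * z₁ := by
    obtain ⟨m, hm⟩ := (hP.congs hq ha.of_mul_right_left hκ).2.1
    obtain ⟨n, hn⟩ := (hP'.congs hq ha.of_mul_right_left hκ).2.1
    exact ha₂.dvd_of_dvd_mul_left ⟨y₁ * n - z₁ * m, by linear_combination y₁ * hn - z₁ * hm⟩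
  have hpow : q ^ 3 ∣ (y₁ * z₂) ^ 3 - (y₂ * z₁) ^ 3 := by
    have hcop : IsCoprime (q ^ 3) (a₂ * x₂ ^ 2) :=
      (ha₂.mul_right hP.isCoprime_mul₂.of_mul_right_left.pow_right).pow_left
    obtain ⟨m, hm⟩ := hP.cube_dvd_form
    obtain ⟨n, hn⟩ := hP'.cube_dvd_form
    refine hcop.dvd_of_dvd_mul_left ⟨y₁ ^ 3 * n - z₁ ^ 3 * m, ?_⟩
    linear_combination y₁ ^ 3 * hn - z₁ ^ 3 * hm
  obtain ⟨rfl, rfl⟩ := eq_and_eq_of_cube_dvd three_ne_zero hP.isCoprime_y hP'.isCoprime_y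
    hP.y₁_pos hP.y₂_pos hP'.y₁_pos hP'.y₂_pos hy₁ hy₂ hz₁ hz₂ (by norm_num; linarith) hcop hdvd hpow
  rfl

lemma eq_of_mem_primitivePoints_of_y_eq (ha : IsCoprime q (a₁ * a₂)) (hκ : IsCoprime q κ)
    (hX : 4 * (X₁ * X₂) < (q : ℝ) ^ 3) (hP : P ∈ primitivePoints a₁ a₂ q κ X₁ X₂ Y₁ Y₂)
    (hP' : P' ∈ primitivePoints a₁ a₂ q κ X₁ X₂ Y₁ Y₂) (hy₁ : P.2.2.1 = P'.2.2.1)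
    (hy₂ : P.2.2.2 = P'.2.2.2) : P = P' := by
  obtain ⟨x₁, x₂, y₁, y₂⟩ := P
  obtain ⟨z₁, z₂, _, _⟩ := P'
  obtain ⟨rfl, rfl⟩ : y₁ = _ ∧ y₂ = _ := ⟨hy₁, hy₂⟩
  obtain ⟨hP, hx₁, hx₂, -, -⟩ := hP
  obtain ⟨hP', hz₁, hz₂, -, -⟩ := hP'
  have hq : q ≠ 0 := by
    rintro rfl
    have h1 : (0 : ℝ) < x₁ := mod_cast hP.x₁_pos
    have h2 : (0 : ℝ) < x₂ := mod_cast hP.x₂_pos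
    have : 0 < X₁ * X₂ := mul_pos (h1.trans_le hx₁) (h2.trans_le hx₂)
    norm_num at hX
    linarith
  have ha₁ := ha.of_mul_right_left
  have hcop : IsCoprime q (x₂ * z₁) :=
    hP.isCoprime_mul₂.of_mul_right_left.mul_right (hP'.isCoprime_mul₁ hκ).of_mul_right_left
  have hdvd : q ∣ x₁ * z₂ - x₂ * z₁ := by
    obtain ⟨m, hm⟩ := (hP.congs hq ha₁ hκ).1
    obtain ⟨n, hn⟩ := (hP'.congs hq ha₁ hκ).1
    refine ha.of_mul_right_right.dvd_of_dvd_mul_left ⟨z₂ * m - x₂ * n, ?_⟩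
    linear_combination z₂ * hm - x₂ * hn
  have hpow : q ^ 3 ∣ (x₁ * z₂) ^ 2 - (x₂ * z₁) ^ 2 := by
    have hcop : IsCoprime (q ^ 3) (a₁ * y₁ ^ 3) :=
      (ha₁.mul_right (hP.isCoprime_mul₁ hκ).of_mul_right_right.pow_right).pow_left
    obtain ⟨m, hm⟩ := hP.cube_dvd_form
    obtain ⟨n, hn⟩ := hP'.cube_dvd_form
    refine hcop.dvd_of_dvd_mul_left ⟨z₂ ^ 2 * m - x₂ ^ 2 * n, ?_⟩
    linear_combination z₂ ^ 2 * hm - x₂ ^ 2 * hn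
  obtain ⟨rfl, rfl⟩ := eq_and_eq_of_cube_dvd two_ne_zero hP.isCoprime_x hP'.isCoprime_x
    hP.x₁_pos hP.x₂_pos hP'.x₁_pos hP'.x₂_pos hx₁ hx₂ hz₁ hz₂ (by norm_num; linarith) hcop hdvd hpow
  rfl

end Uniqueness

/-! ### The congruence lattice -/

section CongruenceLattice

open scoped Matrix

variable {a₁ a₂ q κ : ℤ}

/-- The vector of the products `xᵢyⱼ`, in the order `x₁y₁, x₁y₂, x₂y₁, x₂y₂`. -/
def tensor (P : ℤ⁴) : Fin 4 → ℤ :=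
  ![P.1 * P.2.2.1, P.1 * P.2.2.2, P.2.1 * P.2.2.1, P.2.1 * P.2.2.2]

/-- The coefficients of the congruences (c2), (c3), (c4) as linear conditions on `tensor P`, scaled
by `q²`, `q` and `1` so that all three are congruences modulo `q³`. -/
def congruenceMatrix (a₁ a₂ q κ : ℤ) : Matrix (Fin 3) (Fin 4) ℤ :=
  !![0, 0, q ^ 2 * (κ ^ 2 * a₁), q ^ 2 * a₂;
    q * (2 * a₂), 0, q * (κ ^ 3 * a₁), q * (3 * κ * a₂);
    5 * κ ^ 2 * a₁ * a₂, a₂ ^ 2, κ ^ 5 * a₁ ^ 2, 5 * κ ^ 3 * a₁ * a₂]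

/-- The lattice in `ℤ⁴` cut out by the congruences (c2), (c3), (c4), viewed as linear conditions on
the products `xᵢyⱼ`. -/
def congruenceLattice (a₁ a₂ q κ : ℤ) : Set (Fin 4 → ℤ) :=
  {w | ∀ i, q ^ 3 ∣ (congruenceMatrix a₁ a₂ q κ *ᵥ w) i}

lemma congs_iff_tensor_mem_congruenceLattice (hq : q ≠ 0) {P : ℤ⁴} :
    Congs a₁ a₂ q κ P.1 P.2.1 P.2.2.1 P.2.2.2 ↔
      q ∣ a₂ * P.1 - κ ^ 3 * a₁ * P.2.1 ∧ q ∣ κ ^ 2 * a₁ * P.2.2.1 + a₂ * P.2.2.2 ∧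
        tensor P ∈ congruenceLattice a₁ a₂ q κ := by
  obtain ⟨x₁, x₂, y₁, y₂⟩ := P
  have hc2 : q ∣ κ ^ 2 * a₁ * x₂ * y₁ + a₂ * x₂ * y₂ ↔
      q ^ 3 ∣ q ^ 2 * (κ ^ 2 * a₁) * (x₂ * y₁) + q ^ 2 * a₂ * (x₂ * y₂) := by
    rw [← mul_dvd_mul_iff_left (pow_ne_zero 2 hq)]
    ring_nf
  have hc3 : q ^ 2 ∣ 2 * a₂ * x₁ * y₁ + κ ^ 3 * a₁ * x₂ * y₁ + 3 * κ * a₂ * x₂ * y₂ ↔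
      q ^ 3 ∣ q * (2 * a₂) * (x₁ * y₁) + q * (κ ^ 3 * a₁) * (x₂ * y₁) +
        q * (3 * κ * a₂) * (x₂ * y₂) := by
    rw [← mul_dvd_mul_iff_left hq]
    ring_nf
  simp only [Congs, hc2, hc3]
  simp [congruenceLattice, congruenceMatrix, tensor, Fin.forall_fin_succ, Matrix.vecHead,
    Matrix.vecTail, mul_assoc, add_assoc]

lemma mem_scaledDual_congruenceLattice_of_modEq {m : Fin 3 → ℤ} {c : Fin 4 → ℤ}
    (hc : ∀ j, q ^ 3 ∣ c j - (m ᵥ* congruenceMatrix a₁ a₂ q κ) j) :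
    c ∈ scaledDual (q ^ 3) (congruenceLattice a₁ a₂ q κ) := by
  intro w hw
  rw [← sub_add_cancel c (m ᵥ* congruenceMatrix a₁ a₂ q κ), add_dotProduct,
    ← Matrix.dotProduct_mulVec]
  exact dvd_add (Finset.dvd_sum fun j _ => (hc j).mul_right _)
    (Finset.dvd_sum fun i _ => (hw i).mul_left _)

/-- A fundamental domain for the row combinations of `congruenceMatrix` modulo `q³`, halved in the
second coordinate on account of the coefficient `2` in (c3). -/
noncomputable def rowCombinations (q : ℤ) : Finset (ℤ × ℤ × ℤ) :=
  Finset.Ico 0 q ×ˢ Finset.Ico 0 ((q ^ 2 + 1) / 2) ×ˢ Finset.Ico 0 (q ^ 3)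

lemma pow_six_le_two_mul_card_rowCombinations (hq : 0 < q) :
    (q : ℝ) ^ 6 ≤ 2 * (rowCombinations q).card := by
  have hcard : ((rowCombinations q).card : ℤ) = q * ((q ^ 2 + 1) / 2 * q ^ 3) := by
    simp only [rowCombinations, Finset.card_product, Int.card_Ico, sub_zero, Nat.cast_mul]
    rw [Int.toNat_of_nonneg hq.le, Int.toNat_of_nonneg (by positivity),
      Int.toNat_of_nonneg (by positivity)]
  have hhalf : q ^ 2 ≤ 2 * ((q ^ 2 + 1) / 2) := by omega
  have hle : q ^ 6 ≤ 2 * ((rowCombinations q).card : ℤ) := by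
    rw [hcard]
    linarith [mul_le_mul_of_nonneg_right hhalf (show 0 ≤ q ^ 4 by positivity)]
  exact_mod_cast hle

-- The columns of indices 1, 0, 3 form a triangular system for the coordinates of `m - n`.
lemma eq_of_dvd_vecMul_congruenceMatrix (hq : 0 < q) (ha₂ : IsCoprime q a₂) {m n : ℤ × ℤ × ℤ}
    (hm : m ∈ rowCombinations q) (hn : n ∈ rowCombinations q)
    (hdvd : ∀ j, q ^ 3 ∣ (![m.1 - n.1, m.2.1 - n.2.1, m.2.2 - n.2.2] ᵥ*
      congruenceMatrix a₁ a₂ q κ) j) : m = n := by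
  obtain ⟨m₀, m₁, m₂⟩ := m
  obtain ⟨n₀, n₁, n₂⟩ := n
  simp only [rowCombinations, Finset.mem_product, Finset.mem_Ico] at hm hn
  have h0 := hdvd 0
  have h1 := hdvd 1
  have h3 := hdvd 3
  simp only [congruenceMatrix, Matrix.vecMul, dotProduct, Fin.sum_univ_three, Matrix.of_apply,
    Matrix.cons_val', Matrix.cons_val_fin_one, Matrix.cons_val_zero, Matrix.cons_val_one,
    Matrix.cons_val] at h0 h1 h3
  have eq₂ : m₂ - n₂ = 0 := by
    refine Int.eq_zero_of_abs_lt_dvd (m := q ^ 3) ?_ (abs_lt.mpr (by constructor <;> linarith))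
    exact (ha₂.pow (m := 3) (n := 2)).dvd_of_dvd_mul_right (by simpa using h1)
  have eq₁ : 2 * (m₁ - n₁) = 0 := by
    refine Int.eq_zero_of_abs_lt_dvd (m := q ^ 2) ?_ (abs_lt.mpr (by constructor <;> omega))
    refine (ha₂.pow_left (m := 2)).dvd_of_dvd_mul_right ((mul_dvd_mul_iff_left hq.ne').mp ?_)
    obtain ⟨k, hk⟩ := h0
    exact ⟨k, by linear_combination hk - 5 * κ ^ 2 * a₁ * a₂ * eq₂⟩
  have eq₀ : m₀ - n₀ = 0 := by
    refine Int.eq_zero_of_abs_lt_dvd (m := q) ?_ (abs_lt.mpr (by constructor <;> linarith))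
    refine ha₂.dvd_of_dvd_mul_right ((mul_dvd_mul_iff_left (pow_ne_zero 2 hq.ne')).mp ?_)
    obtain ⟨k, hk⟩ := h3
    have hm₁ : m₁ - n₁ = 0 := by linarith
    exact ⟨k, by linear_combination hk - q * (3 * κ * a₂) * hm₁ - 5 * κ ^ 3 * a₁ * a₂ * eq₂⟩
  simp only [Prod.mk.injEq]
  exact ⟨sub_eq_zero.mp eq₀, by linarith, sub_eq_zero.mp eq₂⟩

lemma exists_finset_scaledDual_congruenceLattice (hq : 0 < q) (ha₂ : IsCoprime q a₂) :
    ∃ s : Finset (Fin 4 → ℤ), (q : ℝ) ^ 6 ≤ 2 * s.card ∧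
      (∀ c ∈ s, c ∈ scaledDual (q ^ 3) (congruenceLattice a₁ a₂ q κ)) ∧
      ∀ c ∈ s, ∀ j, c j ∈ Set.Ico 0 (q ^ 3) := by
  classical
  set residues : ℤ × ℤ × ℤ → Fin 4 → ℤ := fun m j =>
    (![m.1, m.2.1, m.2.2] ᵥ* congruenceMatrix a₁ a₂ q κ) j % q ^ 3
  have hinj : Set.InjOn residues (rowCombinations q) := by
    intro m hm n hn heq
    refine eq_of_dvd_vecMul_congruenceMatrix (a₁ := a₁) (κ := κ) hq ha₂ hm hn fun j => ?_
    have hsub : ![m.1 - n.1, m.2.1 - n.2.1, m.2.2 - n.2.2] =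
        ![m.1, m.2.1, m.2.2] - ![n.1, n.2.1, n.2.2] := by simp
    rw [hsub, Matrix.sub_vecMul]
    exact Int.ModEq.dvd (congrFun heq j).symm
  refine ⟨(rowCombinations q).image residues, ?_, fun c hc => ?_, fun c hc j => ?_⟩
  · rw [Finset.card_image_of_injOn hinj]
    exact pow_six_le_two_mul_card_rowCombinations hq
  · obtain ⟨m, -, rfl⟩ := Finset.mem_image.mp hc
    exact mem_scaledDual_congruenceLattice_of_modEq fun j => Int.ModEq.dvd (Int.mod_modEq _ _).symm
  · obtain ⟨m, -, rfl⟩ := Finset.mem_image.mp hc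
    have hq3 : 0 < q ^ 3 := by positivity
    exact ⟨Int.emod_nonneg _ hq3.ne', Int.emod_lt_of_pos _ hq3⟩

variable {W : Fin 4 → ℝ} {H : ℝ}

lemma pow_four_le_mul_ncard_boxPoints (hq : 0 < q) (ha₂ : IsCoprime q a₂) {T : ℝ} (hT : 0 < T)
    (hTW : ∀ j, T ≤ W j) :
    (q : ℝ) ^ 6 * T ^ 4 ≤ 32 * (∏ j, W j) *
      (boxPoints (scaledDual (q ^ 3) (congruenceLattice a₁ a₂ q κ)) (fun j => q ^ 3 / W j)
        T).ncard := by
  obtain ⟨s, hcard, hs, hsq⟩ :=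
    exists_finset_scaledDual_congruenceLattice (a₁ := a₁) (κ := κ) hq ha₂
  have hq' : (0 : ℝ) < q := mod_cast hq
  have hW : ∀ j, 0 < W j := fun j => hT.trans_le (hTW j)
  have hWprod : 0 < ∏ j, W j := Finset.prod_pos fun j _ => hW j
  have hside : ∀ j, T * (q ^ 3 / W j) ≤ ((q ^ 3 : ℤ) : ℝ) := fun j => by
    rw [mul_div_left_comm, Int.cast_pow]
    exact mul_le_of_le_one_right (by positivity) ((div_le_one (hW j)).mpr (hTW j))
  have hbox := card_mul_prod_le_ncard_boxPoints
    (fun j => mul_pos hT (div_pos (pow_pos hq' 3) (hW j))) hside hs hsq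
  rw [Finset.prod_mul_distrib, Finset.prod_div_distrib, Finset.prod_const, Finset.prod_const,
    Finset.card_univ, Fintype.card_fin, Int.cast_pow] at hbox
  refine le_of_mul_le_mul_right ?_ (pow_pos hq' 12)
  have hvol : 0 ≤ T ^ 4 * ((q : ℝ) ^ 3) ^ 4 := by positivity
  calc (q : ℝ) ^ 6 * T ^ 4 * q ^ 12 = q ^ 6 * (T ^ 4 * (q ^ 3) ^ 4) := by ring
    _ ≤ 2 * s.card * (T ^ 4 * (q ^ 3) ^ 4) := mul_le_mul_of_nonneg_right hcard hvol
    _ = 2 * (∏ j, W j) * (s.card * (T ^ 4 * ((q ^ 3) ^ 4 / ∏ j, W j))) := by field_simp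
    _ ≤ 2 * (∏ j, W j) * (_ * (2 * (q : ℝ) ^ 3) ^ 4) := by gcongr
    _ = 32 * (∏ j, W j) * _ * q ^ 12 := by ring

lemma exists_hyperplane_cover_congruenceLattice (hq : 0 < q) (ha₂ : IsCoprime q a₂) (hH : 1 ≤ H)
    (hWH : ∀ j, 2 ^ 11 * H ≤ W j) (hprod : ∏ j, W j ≤ 2 ^ 16 * (q : ℝ) ^ 6 * H ^ 3) :
    ∃ 𝓗 : Finset (Fin 4 → ℤ), 𝓗.card ≤ 25 ^ 4 * 2 ^ 13 * H ∧
      (∀ c ∈ 𝓗, c ≠ 0 ∧ ∀ j, |c j| ≤ q ^ 3) ∧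
      ∀ w ∈ congruenceLattice a₁ a₂ q κ, (∀ j, |(w j : ℝ)| ≤ W j) → ∃ c ∈ 𝓗, c ⬝ᵥ w = 0 := by
  obtain ⟨n, hn, hn'⟩ := exists_nat_pow_near (x := 2 ^ 12 * H) (y := (2 : ℝ)) (by linarith)
    one_lt_two
  have hq' : (0 : ℝ) < q := mod_cast hq
  have hW : ∀ j, 0 < W j := fun j => by linarith [hWH j]
  set T : ℝ := 2 ^ (n + 1) / 8 with hTdef
  have hT : 2 ^ 9 * H ≤ T := by linarith
  have hT' : T ≤ 2 ^ 10 * H := by rw [hTdef, pow_succ]; linarith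
  have hlarge : (2 : ℝ) ^ (n + 1) + 1 <
      (boxPoints (scaledDual (q ^ 3) (congruenceLattice a₁ a₂ q κ)) (fun j => q ^ 3 / W j)
        T).ncard := by
    set N := (boxPoints (scaledDual (q ^ 3) (congruenceLattice a₁ a₂ q κ)) (fun j => q ^ 3 / W j)
      T).ncard
    have hcount : T * 2 ^ 6 ≤ N := by
      refine le_of_mul_le_mul_left ?_ (show 0 < 2 ^ 21 * (q : ℝ) ^ 6 * H ^ 3 by positivity)
      calc 2 ^ 21 * (q : ℝ) ^ 6 * H ^ 3 * (T * 2 ^ 6) = q ^ 6 * ((2 ^ 9 * H) ^ 3 * T) := by ring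
        _ ≤ q ^ 6 * (T ^ 3 * T) := by gcongr
        _ = q ^ 6 * T ^ 4 := by ring
        _ ≤ 32 * (∏ j, W j) * N :=
          pow_four_le_mul_ncard_boxPoints hq ha₂ (by linarith) fun j => by linarith [hWH j]
        _ ≤ 32 * (2 ^ 16 * (q : ℝ) ^ 6 * H ^ 3) * N := by gcongr
        _ = 2 ^ 21 * (q : ℝ) ^ 6 * H ^ 3 * N := by ring
    linarith
  obtain ⟨𝓗, hcard, hbox, hcover⟩ := exists_hyperplane_cover (pow_pos hq 3)
    (fun j => div_pos (pow_pos hq' 3) (hW j)) (k := n + 1)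
    (by convert hlarge using 4; rw [hTdef, Fintype.card_fin]; norm_num)
  rw [Fintype.card_fin] at hcard
  refine ⟨𝓗, ?_, fun c hc => ⟨(hbox c hc).1, fun j => ?_⟩, fun w hw hwW => hcover w hw fun j => ?_⟩
  · calc (𝓗.card : ℝ) ≤ 25 ^ 4 * 2 ^ (n + 1) := mod_cast hcard
      _ ≤ 25 ^ 4 * 2 ^ 13 * H := by linarith
  · have hcj : |(c j : ℝ)| ≤ q ^ 3 := calc
      |(c j : ℝ)| ≤ 2 ^ (n + 1) / (Fintype.card (Fin 4)) * (q ^ 3 / W j) := (hbox c hc).2.2 j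
      _ = 2 * T / W j * q ^ 3 := by rw [hTdef, Fintype.card_fin]; push_cast; ring
      _ ≤ q ^ 3 := by
        refine mul_le_of_le_one_left (by positivity) ((div_le_one (hW j)).mpr ?_)
        linarith [hWH j]
    exact_mod_cast hcj
  · rw [Int.cast_pow, mul_div_left_comm]
    exact mul_le_of_le_one_right (by positivity) ((div_le_one (hW j)).mpr (hwW j))

end CongruenceLattice

/-! ### Covers of the primitive points -/

/-- The set `S` is covered by at most `N` sets satisfying `p`. -/
def CoverableBy {α : Type*} (p : Set α → Prop) (S : Set α) (N : ℝ) : Prop :=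
  ∃ 𝒞 : Finset (Set α), 𝒞.card ≤ N ∧ (∀ C ∈ 𝒞, p C) ∧ ∀ P ∈ S, ∃ C ∈ 𝒞, P ∈ C

namespace CoverableBy

variable {α ι : Type*} {p : Set α → Prop} {S T : Set α} {N N' : ℝ}

lemma mono (h : CoverableBy p T N) (hST : S ⊆ T) (hN : N ≤ N') : CoverableBy p S N' := by
  obtain ⟨𝒞, hcard, hp, hcover⟩ := h
  exact ⟨𝒞, hcard.trans hN, hp, fun P hP => hcover P (hST hP)⟩

lemma biUnion {I : Finset ι} {f : ι → Set α} (h : ∀ i ∈ I, CoverableBy p (f i) N) :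
    CoverableBy p (⋃ i ∈ I, f i) (I.card * N) := by
  classical
  choose! 𝒞 hcard hp hcover using h
  refine ⟨I.biUnion 𝒞, ?_, fun C hC => ?_, fun P hP => ?_⟩
  · calc ((I.biUnion 𝒞).card : ℝ) ≤ ∑ i ∈ I, ((𝒞 i).card : ℝ) := mod_cast Finset.card_biUnion_le
      _ ≤ ∑ _i ∈ I, N := Finset.sum_le_sum hcard
      _ = I.card * N := by simp
  · obtain ⟨i, hi, hC⟩ := Finset.mem_biUnion.mp hC
    exact hp i hi C hC
  · obtain ⟨i, hi, hPi⟩ := Set.mem_iUnion₂.mp hP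
    obtain ⟨C, hC, hPC⟩ := hcover i hi P hPi
    exact ⟨C, Finset.mem_biUnion.mpr ⟨i, hi, hC⟩, hPC⟩

lemma of_singletons (s : Finset α) (hp : ∀ P, p {P}) : CoverableBy p s s.card := by
  classical
  refine ⟨s.image fun P => {P}, mod_cast Finset.card_image_le, fun C hC => ?_, fun P hP => ?_⟩
  · obtain ⟨P, -, rfl⟩ := Finset.mem_image.mp hC
    exact hp P
  · exact ⟨{P}, Finset.mem_image_of_mem _ hP, rfl⟩

end CoverableBy

/-- Both projections `(x₁, x₂)` and `(y₁, y₂)` are injective on `M`. -/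
def HasInjectiveProjections (M : Submodule ℤ ℤ⁴) : Prop :=
  ∀ P ∈ M, P ≠ 0 → (P.1, P.2.1) ≠ (0, 0) ∧ (P.2.2.1, P.2.2.2) ≠ (0, 0)

/-- The lattices allowed in the collection `𝓛(q, κ)`. -/
structure IsCoveringLattice (a₁ a₂ q κ : ℤ) (M : Submodule ℤ ℤ⁴) : Prop where
  finrank_eq : Module.finrank ℤ M = 2
  congs : ∀ P ∈ M, Congs a₁ a₂ q κ P.1 P.2.1 P.2.2.1 P.2.2.2
  exists_form_ne_zero :
    ∃ P ∈ M, a₁ * P.1 ^ 2 * P.2.2.1 ^ 3 + a₂ * P.2.1 ^ 2 * P.2.2.2 ^ 3 ≠ 0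
  injective : HasInjectiveProjections M

/-- The pieces into which the points are divided: each contributes a point to `S₀(q, κ)` or a
lattice to `𝓛(q, κ)`. -/
def IsCoveringPiece (a₁ a₂ q κ : ℤ) (C : Set ℤ⁴) : Prop :=
  C.Subsingleton ∨ IsCoveringLattice a₁ a₂ q κ (Submodule.span ℤ C)

lemma CoverableBy.exists_covering_lattices {a₁ a₂ q κ : ℤ} {S : Set ℤ⁴} {N : ℝ}
    (h : CoverableBy (IsCoveringPiece a₁ a₂ q κ) S N) :
    ∃ (S' : Set ℤ⁴) (L : Finset (Submodule ℤ ℤ⁴)), S' ⊆ S ∧ S'.ncard ≤ N ∧ L.card ≤ N ∧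
      (∀ P ∈ S \ S', ∃ M ∈ L, P ∈ M) ∧ ∀ M ∈ L, IsCoveringLattice a₁ a₂ q κ M := by
  classical
  obtain ⟨𝒞, hcard, hpiece, hcover⟩ := h
  refine ⟨S ∩ ⋃ C ∈ 𝒞.filter Set.Subsingleton, C,
    (𝒞.filter (¬ Set.Subsingleton ·)).image (Submodule.span ℤ), Set.inter_subset_left,
    le_trans ?_ hcard, le_trans ?_ hcard, ?_, ?_⟩
  · have hsub : ∀ C ∈ 𝒞.filter Set.Subsingleton, C.Subsingleton := by simp
    have hfin : (⋃ C ∈ 𝒞.filter Set.Subsingleton, C).Finite :=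
      Set.Finite.biUnion (Finset.finite_toSet _) fun C hC => (hsub C hC).finite
    norm_cast
    calc (S ∩ ⋃ C ∈ 𝒞.filter Set.Subsingleton, C).ncard
        ≤ (⋃ C ∈ 𝒞.filter Set.Subsingleton, C).ncard :=
          Set.ncard_le_ncard Set.inter_subset_right hfin
      _ ≤ ∑ C ∈ 𝒞.filter Set.Subsingleton, C.ncard := Finset.set_ncard_biUnion_le _ _
      _ ≤ (𝒞.filter Set.Subsingleton).card • 1 :=
          Finset.sum_le_card_nsmul _ _ _ fun C hC =>
            (Set.ncard_le_one (hsub C hC).finite).mpr (hsub C hC)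
      _ ≤ 𝒞.card := by simpa using Finset.card_filter_le _ _
  · exact_mod_cast Finset.card_image_le.trans (Finset.card_filter_le _ _)
  · rintro P ⟨hPS, hP⟩
    obtain ⟨C, hC, hPC⟩ := hcover P hPS
    refine ⟨_, Finset.mem_image_of_mem _ (Finset.mem_filter.mpr ⟨hC, fun hsub => hP ⟨hPS, ?_⟩⟩),
      Submodule.subset_span hPC⟩
    exact Set.mem_biUnion (Finset.mem_filter.mpr ⟨hC, hsub⟩) hPC
  · intro M hM
    obtain ⟨C, hC, rfl⟩ := Finset.mem_image.mp hM
    obtain ⟨hC, hnsub⟩ := Finset.mem_filter.mp hC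
    exact (hpiece C hC).resolve_left hnsub

/-! ### Splitting the points of a lattice of rank two -/

lemma exists_le_span_pair_of_inf_ker_le {R M : Type*} [CommRing R] [IsPrincipalIdealRing R]
    [AddCommGroup M] [Module R M] {N : Submodule R M} {D : M →ₗ[R] R} {z : M}
    (h : N ⊓ LinearMap.ker D ≤ Submodule.span R {z}) : ∃ e, N ≤ Submodule.span R {z, e} := by
  obtain ⟨m, hm⟩ := (IsPrincipalIdealRing.principal (N.map D)).principal
  obtain ⟨e, heN, hem⟩ : m ∈ N.map D := hm ▸ Submodule.mem_span_singleton_self m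
  refine ⟨e, fun P hP => ?_⟩
  obtain ⟨v, hv⟩ := Submodule.mem_span_singleton.mp (hm ▸ Submodule.mem_map_of_mem hP)
  have hker : P - v • e ∈ N ⊓ LinearMap.ker D :=
    ⟨N.sub_mem hP (N.smul_mem v heN), by simp [hem, ← hv]⟩
  obtain ⟨u, hu⟩ := Submodule.mem_span_singleton.mp (h hker)
  exact Submodule.mem_span_pair.mpr ⟨u, v, by rw [hu]; abel⟩

-- On the set of all `u • z + v • e` with `g ∣ v` and `R ∣ g * (b * u + c * v)` the quadratic
-- condition `R ∣ Q` has become linear.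
lemma dvd_of_mem_span_of_gcd_eq {M : Type*} [AddCommGroup M] {Q : M → ℤ} {z e : M} {b c R g : ℤ}
    (hQ : ∀ u v : ℤ, Q (u • z + v • e) = u ^ 2 * Q z + v * (b * u + c * v)) (hz : R ∣ Q z)
    {C : Set M} (hC : ∀ P ∈ C, R ∣ Q P ∧ ∃ u v : ℤ, u • z + v • e = P ∧ Int.gcd R v = g)
    {P : M} (hP : P ∈ Submodule.span ℤ C) : R ∣ Q P := by
  suffices h : ∃ u v : ℤ, u • z + v • e = P ∧ g ∣ v ∧ R ∣ g * (b * u + c * v) by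
    obtain ⟨u, v, rfl, hv, hR⟩ := h
    rw [hQ]
    exact dvd_add (hz.mul_left _) (hR.trans (mul_dvd_mul_right hv _))
  induction hP using Submodule.span_induction with
  | mem P hP =>
    obtain ⟨hR, u, v, rfl, rfl⟩ := hC P hP
    rw [hQ, dvd_add_right (hz.mul_left _)] at hR
    exact ⟨u, v, rfl, Int.gcd_dvd_right _ _, Int.coe_gcd R v ▸ dvd_gcd_mul_of_dvd_mul hR⟩
  | zero => exact ⟨0, 0, by simp, dvd_zero g, by simp⟩
  | add P P' _ _ h h' =>
    obtain ⟨u, v, rfl, hv, hR⟩ := h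
    obtain ⟨u', v', rfl, hv', hR'⟩ := h'
    refine ⟨u + u', v + v', by module, dvd_add hv hv', ?_⟩
    exact (dvd_add hR hR').trans (dvd_of_eq (by ring))
  | smul r P _ h =>
    obtain ⟨u, v, rfl, hv, hR⟩ := h
    refine ⟨r * u, r * v, by module, hv.mul_left r, ?_⟩
    exact (hR.mul_left r).trans (dvd_of_eq (by ring))

lemma exists_dotProduct_tensor_add_smul (f : Fin 4 → ℤ) (z e : ℤ⁴) :
    ∃ b c : ℤ, ∀ u v : ℤ, f ⬝ᵥ tensor (u • z + v • e) =
      u ^ 2 * (f ⬝ᵥ tensor z) + v * (b * u + c * v) := by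
  refine ⟨f ⬝ᵥ tensor (z + e) - f ⬝ᵥ tensor z - f ⬝ᵥ tensor e, f ⬝ᵥ tensor e, fun u v => ?_⟩
  simp only [tensor, dotProduct, Fin.sum_univ_four, Matrix.cons_val, Prod.fst_add, Prod.snd_add,
    Prod.smul_fst, Prod.smul_snd, smul_eq_mul, Matrix.cons_val_zero, Matrix.cons_val_one]
  ring

lemma congs_of_mem_span_of_gcd_eq {a₁ a₂ q κ g : ℤ} (hq : q ≠ 0) {z e : ℤ⁴} {C : Set ℤ⁴}
    (hz : Congs a₁ a₂ q κ z.1 z.2.1 z.2.2.1 z.2.2.2)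
    (hC : ∀ P ∈ C, Congs a₁ a₂ q κ P.1 P.2.1 P.2.2.1 P.2.2.2 ∧
      ∃ u v : ℤ, u • z + v • e = P ∧ Int.gcd (q ^ 3) v = g)
    {P : ℤ⁴} (hP : P ∈ Submodule.span ℤ C) : Congs a₁ a₂ q κ P.1 P.2.1 P.2.2.1 P.2.2.2 := by
  simp only [congs_iff_tensor_mem_congruenceLattice hq] at hz hC ⊢
  refine ⟨?_, ?_, fun i => ?_⟩
  · induction hP using Submodule.span_induction with
    | mem P hP => exact (hC P hP).1.1
    | zero => simp
    | add P P' _ _ h h' => exact (dvd_add h h').trans (dvd_of_eq (by simp; ring))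
    | smul r P _ h => exact (h.mul_left r).trans (dvd_of_eq (by simp; ring))
  · induction hP using Submodule.span_induction with
    | mem P hP => exact (hC P hP).1.2.1
    | zero => simp
    | add P P' _ _ h h' => exact (dvd_add h h').trans (dvd_of_eq (by simp; ring))
    | smul r P _ h => exact (h.mul_left r).trans (dvd_of_eq (by simp; ring))
  · obtain ⟨b, c, hbc⟩ := exists_dotProduct_tensor_add_smul (congruenceMatrix a₁ a₂ q κ i) z e
    exact dvd_of_mem_span_of_gcd_eq (Q := (congruenceMatrix a₁ a₂ q κ i ⬝ᵥ tensor ·)) hbc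
      (hz.2.2 i) (fun Q hQ => ⟨(hC Q hQ).1.2.2 i, (hC Q hQ).2⟩) hP

namespace HasInjectiveProjections

variable {N : Submodule ℤ ℤ⁴}

lemma eq_of_y_eq (hN : HasInjectiveProjections N) {P P' : ℤ⁴} (hP : P ∈ N) (hP' : P' ∈ N)
    (h : P.2.2 = P'.2.2) : P = P' := by
  by_contra hne
  refine (hN (P - P') (N.sub_mem hP hP') (sub_ne_zero.mpr hne)).2 ?_
  simp [h]

lemma exists_le_span_pair (hN : HasInjectiveProjections N) {z : ℤ⁴} (hzN : z ∈ N)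
    (hz : IsCoprime z.2.2.1 z.2.2.2) : ∃ e, N ≤ Submodule.span ℤ {z, e} := by
  let y₁ : ℤ⁴ →ₗ[ℤ] ℤ := LinearMap.fst ℤ ℤ ℤ ∘ₗ LinearMap.snd ℤ ℤ _ ∘ₗ LinearMap.snd ℤ ℤ _
  let y₂ : ℤ⁴ →ₗ[ℤ] ℤ := LinearMap.snd ℤ ℤ ℤ ∘ₗ LinearMap.snd ℤ ℤ _ ∘ₗ LinearMap.snd ℤ ℤ _
  refine exists_le_span_pair_of_inf_ker_le (D := y₁ z • y₂ - y₂ z • y₁) ?_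
  rintro P ⟨hPN, hP⟩
  have hdet : z.2.2.1 * P.2.2.2 - z.2.2.2 * P.2.2.1 = 0 := hP
  obtain ⟨g, h, hgh⟩ := hz
  refine Submodule.mem_span_singleton.mpr ⟨g * P.2.2.1 + h * P.2.2.2, ?_⟩
  refine hN.eq_of_y_eq (N.smul_mem _ hzN) hPN (Prod.ext ?_ ?_)
  · simp only [Prod.smul_snd, Prod.smul_fst, smul_eq_mul]
    linear_combination P.2.2.1 * hgh + h * hdet
  · simp only [Prod.smul_snd, smul_eq_mul]
    linear_combination P.2.2.2 * hgh - g * hdet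

lemma mono {M : Submodule ℤ ℤ⁴} (hN : HasInjectiveProjections N) (hM : M ≤ N) :
    HasInjectiveProjections M :=
  fun P hP => hN P (hM hP)

lemma finrank_eq_two (hN : HasInjectiveProjections N) {P P' : ℤ⁴} (hP : P ∈ N) (hP' : P' ∈ N)
    (hdet : P.2.2.1 * P'.2.2.2 ≠ P.2.2.2 * P'.2.2.1) : Module.finrank ℤ N = 2 := by
  let π : N →ₗ[ℤ] ℤ × ℤ := LinearMap.snd ℤ ℤ _ ∘ₗ LinearMap.snd ℤ ℤ _ ∘ₗ N.subtype
  have hπ : Function.Injective π := fun Q Q' h => Subtype.ext (hN.eq_of_y_eq Q.2 Q'.2 h)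
  have hli : LinearIndependent ℤ ![π ⟨P, hP⟩, π ⟨P', hP'⟩] := by
    rw [LinearIndependent.pair_iff]
    intro s t hst
    have h₁ : s * P.2.2.1 + t * P'.2.2.1 = 0 := congrArg Prod.fst hst
    have h₂ : s * P.2.2.2 + t * P'.2.2.2 = 0 := congrArg Prod.snd hst
    have hdet : P.2.2.1 * P'.2.2.2 - P.2.2.2 * P'.2.2.1 ≠ 0 := sub_ne_zero.mpr hdet
    refine ⟨(mul_eq_zero.mp ?_).resolve_right hdet, (mul_eq_zero.mp ?_).resolve_right hdet⟩
    · linear_combination P'.2.2.2 * h₁ - P'.2.2.1 * h₂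
    · linear_combination P.2.2.1 * h₂ - P.2.2.2 * h₁
  have hli : LinearIndependent ℤ ![(⟨P, hP⟩ : N), ⟨P', hP'⟩] :=
    LinearIndependent.of_comp π (by convert hli using 1; ext i : 1; fin_cases i <;> rfl)
  refine le_antisymm ?_ (by simpa using hli.fintype_card_le_finrank)
  simpa using LinearMap.finrank_le_finrank_of_injective hπ

end HasInjectiveProjections

section Classes

variable {a₁ a₂ q κ : ℤ} {X₁ X₂ Y₁ Y₂ : ℝ} {N : Submodule ℤ ℤ⁴}

lemma isCoveringPiece_of_gcd_eq (hq : q ≠ 0) (ha₁ : IsCoprime q a₁) (hκ : IsCoprime q κ)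
    (hN : HasInjectiveProjections N) {z e : ℤ⁴} {g : ℤ}
    (hz : z ∈ primitivePoints a₁ a₂ q κ X₁ X₂ Y₁ Y₂) {C : Set ℤ⁴}
    (hC : ∀ P ∈ C, P ∈ primitivePoints a₁ a₂ q κ X₁ X₂ Y₁ Y₂ ∧ P ∈ N ∧
      ∃ u v : ℤ, u • z + v • e = P ∧ Int.gcd (q ^ 3) v = g) :
    IsCoveringPiece a₁ a₂ q κ C := by
  refine or_iff_not_imp_left.mpr fun hsub => ?_
  obtain ⟨P, hP, P', hP', hne⟩ := Set.not_subsingleton_iff.mp hsub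
  have hspan : Submodule.span ℤ C ≤ N := Submodule.span_le.mpr fun P hP => (hC P hP).2.1
  have hinj := hN.mono hspan
  have hPC := Submodule.subset_span (R := ℤ) hP
  have hPC' := Submodule.subset_span (R := ℤ) hP'
  have hprim := (hC P hP).1.1
  have hprim' := (hC P' hP').1.1
  have hdet : P.2.2.1 * P'.2.2.2 ≠ P.2.2.2 * P'.2.2.1 := fun hdet => by
    obtain ⟨hy₁, hy₂⟩ := eq_and_eq_of_isCoprime_of_mul_eq_mul hprim.isCoprime_y
      hprim'.isCoprime_y hprim.y₂_pos hprim'.y₂_pos hdet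
    exact hne (hinj.eq_of_y_eq hPC hPC' (Prod.ext hy₁ hy₂))
  exact ⟨hinj.finrank_eq_two hPC hPC' hdet, fun Q hQ => congs_of_mem_span_of_gcd_eq hq
    (hz.1.congs hq ha₁ hκ) (fun P hP => ⟨(hC P hP).1.1.congs hq ha₁ hκ, (hC P hP).2.2⟩) hQ,
    ⟨P, hPC, hprim.form_ne_zero⟩, hinj⟩

lemma coverableBy_primitivePoints_inter (hq : q ≠ 0) (ha₁ : IsCoprime q a₁) (hκ : IsCoprime q κ)
    (hN : HasInjectiveProjections N) :
    CoverableBy (IsCoveringPiece a₁ a₂ q κ) (primitivePoints a₁ a₂ q κ X₁ X₂ Y₁ Y₂ ∩ N)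
      (q ^ 3).natAbs.divisors.card := by
  classical
  rcases (primitivePoints a₁ a₂ q κ X₁ X₂ Y₁ Y₂ ∩ N).eq_empty_or_nonempty with h | ⟨z, hz, hzN⟩
  · exact ⟨∅, by simp, by simp, by simp [h]⟩
  obtain ⟨e, he⟩ := hN.exists_le_span_pair hzN hz.1.isCoprime_y
  let gcdClass (g : ℕ) : Set ℤ⁴ := {P | P ∈ primitivePoints a₁ a₂ q κ X₁ X₂ Y₁ Y₂ ∧ P ∈ N ∧
    ∃ u v : ℤ, u • z + v • e = P ∧ Int.gcd (q ^ 3) v = (g : ℤ)}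
  refine ⟨(q ^ 3).natAbs.divisors.image gcdClass, mod_cast Finset.card_image_le, fun C hC => ?_, ?_⟩
  · obtain ⟨g, -, rfl⟩ := Finset.mem_image.mp hC
    exact isCoveringPiece_of_gcd_eq hq ha₁ hκ hN hz fun P hP => hP
  · rintro P ⟨hP, hPN⟩
    obtain ⟨u, v, huv⟩ := Submodule.mem_span_pair.mp (he hPN)
    refine ⟨gcdClass (Int.gcd (q ^ 3) v), Finset.mem_image_of_mem _ (Nat.mem_divisors.mpr ?_),
      hP, hPN, u, v, huv, rfl⟩
    exact ⟨Int.gcd_dvd_natAbs_left _ _, by simpa using hq⟩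

end Classes

/-! ### Splitting the points on a hyperplane section -/

section Hyperplane

variable {c : Fin 4 → ℤ}

lemma dotProduct_tensor (c : Fin 4 → ℤ) (P : ℤ⁴) :
    c ⬝ᵥ tensor P = P.1 * (c 0 * P.2.2.1 + c 1 * P.2.2.2) +
      P.2.1 * (c 2 * P.2.2.1 + c 3 * P.2.2.2) := by
  simp [tensor, dotProduct, Fin.sum_univ_four]
  ring

/-- The lattice of the points with `d • (x₁, x₂) = (-(c₂y₁ + c₃y₂), c₀y₁ + c₁y₂)`. For `d ≠ 0` this
is a line in the quadric surface `c ⬝ᵥ tensor P = 0`, seen as a curve of bidegree `(1, 1)` in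
`ℙ¹ × ℙ¹`. -/
def lineLattice (c : Fin 4 → ℤ) (d : ℤ) : Submodule ℤ ℤ⁴ where
  carrier := {P | d * P.1 = -(c 2 * P.2.2.1 + c 3 * P.2.2.2) ∧
    d * P.2.1 = c 0 * P.2.2.1 + c 1 * P.2.2.2}
  zero_mem' := by simp
  add_mem' := by
    rintro P Q ⟨hP₁, hP₂⟩ ⟨hQ₁, hQ₂⟩
    constructor <;> simp only [Prod.fst_add, Prod.snd_add]
    · linear_combination hP₁ + hQ₁
    · linear_combination hP₂ + hQ₂
  smul_mem' := by
    rintro r P ⟨hP₁, hP₂⟩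
    constructor <;> simp only [Prod.smul_fst, Prod.smul_snd, smul_eq_mul]
    · linear_combination r * hP₁
    · linear_combination r * hP₂

lemma hasInjectiveProjections_lineLattice {d : ℤ} (hd : d ≠ 0) (hΔ : c 0 * c 3 - c 1 * c 2 ≠ 0) :
    HasInjectiveProjections (lineLattice c d) := by
  rintro ⟨x₁, x₂, y₁, y₂⟩ ⟨h₁, h₂⟩ hne
  dsimp only at h₁ h₂ ⊢
  have hy : (y₁, y₂) ≠ (0, 0) := by
    rintro hy
    obtain ⟨rfl, rfl⟩ := Prod.mk.inj hy
    simp_all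
  refine ⟨fun hx => hy ?_, hy⟩
  obtain ⟨rfl, rfl⟩ := Prod.mk.inj hx
  refine Prod.ext ((mul_eq_zero.mp ?_).resolve_left hΔ) ((mul_eq_zero.mp ?_).resolve_left hΔ)
  · linear_combination -c 3 * h₂ - c 1 * h₁
  · linear_combination c 2 * h₂ + c 0 * h₁

variable {a₁ a₂ q κ : ℤ} {X₁ X₂ Y₁ Y₂ : ℝ}

lemma IsPrimitivePoint.exists_dvd_mem_lineLattice {P : ℤ⁴}
    (hP : IsPrimitivePoint a₁ a₂ q κ P.1 P.2.1 P.2.2.1 P.2.2.2) (hc : c ⬝ᵥ tensor P = 0) :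
    ∃ d, d ∣ c 0 * c 3 - c 1 * c 2 ∧ P ∈ lineLattice c d := by
  rw [dotProduct_tensor] at hc
  obtain ⟨d, hd₂⟩ : P.2.1 ∣ c 0 * P.2.2.1 + c 1 * P.2.2.2 :=
    hP.isCoprime_x.symm.dvd_of_dvd_mul_left
      ⟨-(c 2 * P.2.2.1 + c 3 * P.2.2.2), by linear_combination hc⟩
  have hd₁ : d * P.1 = -(c 2 * P.2.2.1 + c 3 * P.2.2.2) := by
    apply mul_left_cancel₀ hP.x₂_pos.ne'
    linear_combination hc - P.1 * hd₂
  obtain ⟨g, h, hgh⟩ := hP.isCoprime_y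
  refine ⟨d, ⟨g * (c 3 * P.2.1 + c 1 * P.1) - h * (c 0 * P.1 + c 2 * P.2.1), ?_⟩, hd₁,
    by linear_combination -hd₂⟩
  linear_combination (g * c 3 - h * c 2) * hd₂ - (g * c 1 - h * c 0) * hd₁ -
    (c 0 * c 3 - c 1 * c 2) * hgh

lemma coverableBy_of_det_ne_zero (hq : q ≠ 0) (ha₁ : IsCoprime q a₁) (hκ : IsCoprime q κ)
    (hΔ : c 0 * c 3 - c 1 * c 2 ≠ 0) :
    CoverableBy (IsCoveringPiece a₁ a₂ q κ)
      {P ∈ primitivePoints a₁ a₂ q κ X₁ X₂ Y₁ Y₂ | c ⬝ᵥ tensor P = 0}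
      ((c 0 * c 3 - c 1 * c 2).divisors.card * (q ^ 3).natAbs.divisors.card) := by
  refine (CoverableBy.biUnion (I := (c 0 * c 3 - c 1 * c 2).divisors)
    (f := fun d => primitivePoints a₁ a₂ q κ X₁ X₂ Y₁ Y₂ ∩ lineLattice c d) fun d hd =>
      coverableBy_primitivePoints_inter hq ha₁ hκ (hasInjectiveProjections_lineLattice
        (ne_zero_of_dvd_ne_zero hΔ (Int.mem_divisors.mp hd).1) hΔ)).mono ?_ le_rfl
  rintro P ⟨hP, hc⟩
  obtain ⟨d, hd, hPd⟩ := hP.1.exists_dvd_mem_lineLattice hc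
  exact Set.mem_biUnion (Int.mem_divisors.mpr ⟨hd, hΔ⟩) ⟨hP, hPd⟩

-- A matrix of determinant zero has rank at most one, so its bilinear form splits as a product.
lemma eq_zero_or_eq_zero_of_det_eq_zero (hΔ : c 0 * c 3 - c 1 * c 2 = 0) {P : ℤ⁴}
    (hc : c ⬝ᵥ tensor P = 0) :
    (c 0 * P.2.2.1 + c 1 * P.2.2.2 = 0 ∧ c 2 * P.2.2.1 + c 3 * P.2.2.2 = 0) ∨
      (c 0 * P.1 + c 2 * P.2.1 = 0 ∧ c 1 * P.1 + c 3 * P.2.1 = 0) := by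
  rw [dotProduct_tensor] at hc
  rw [or_iff_not_imp_right, not_and_or]
  rintro (h | h)
  · refine ⟨(mul_eq_zero.mp ?_).resolve_left h, (mul_eq_zero.mp ?_).resolve_left h⟩
    · linear_combination c 0 * hc - P.2.1 * P.2.2.2 * hΔ
    · linear_combination c 2 * hc + P.1 * P.2.2.2 * hΔ
  · refine ⟨(mul_eq_zero.mp ?_).resolve_left h, (mul_eq_zero.mp ?_).resolve_left h⟩
    · linear_combination c 1 * hc + P.2.1 * P.2.2.1 * hΔ
    · linear_combination c 3 * hc - P.1 * P.2.2.1 * hΔ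

lemma coverableBy_of_det_eq_zero (ha : IsCoprime q (a₁ * a₂)) (hκ : IsCoprime q κ)
    (hX : 4 * (X₁ * X₂) < (q : ℝ) ^ 3) (hY : 9 * (Y₁ * Y₂) < (q : ℝ) ^ 3) (hc : c ≠ 0)
    (hΔ : c 0 * c 3 - c 1 * c 2 = 0) :
    CoverableBy (IsCoveringPiece a₁ a₂ q κ)
      {P ∈ primitivePoints a₁ a₂ q κ X₁ X₂ Y₁ Y₂ | c ⬝ᵥ tensor P = 0} 2 := by
  classical
  have eq_zero_of_smul {D : ℤ} (h₀ : c 0 * D = 0) (h₁ : c 1 * D = 0) (h₂ : c 2 * D = 0)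
      (h₃ : c 3 * D = 0) : D = 0 := by
    refine (smul_eq_zero.mp (funext fun j => ?_ : D • c = 0)).resolve_right hc
    simp only [Pi.smul_apply, smul_eq_mul, Pi.zero_apply, mul_comm D]
    fin_cases j <;> assumption
  refine ⟨{{P ∈ primitivePoints a₁ a₂ q κ X₁ X₂ Y₁ Y₂ |
      c 0 * P.2.2.1 + c 1 * P.2.2.2 = 0 ∧ c 2 * P.2.2.1 + c 3 * P.2.2.2 = 0},
    {P ∈ primitivePoints a₁ a₂ q κ X₁ X₂ Y₁ Y₂ |
      c 0 * P.1 + c 2 * P.2.1 = 0 ∧ c 1 * P.1 + c 3 * P.2.1 = 0}},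
    mod_cast Finset.card_le_two, ?_, ?_⟩
  · simp only [Finset.mem_insert, Finset.mem_singleton, forall_eq_or_imp, forall_eq]
    constructor
    · refine Or.inl ?_
      rintro P ⟨hP, h₁, h₂⟩ P' ⟨hP', h₁', h₂'⟩
      obtain ⟨hy₁, hy₂⟩ := eq_and_eq_of_isCoprime_of_mul_eq_mul hP.1.isCoprime_y hP'.1.isCoprime_y
        hP.1.y₂_pos hP'.1.y₂_pos (sub_eq_zero.mp (eq_zero_of_smul
          (by linear_combination P'.2.2.2 * h₁ - P.2.2.2 * h₁')
          (by linear_combination P.2.2.1 * h₁' - P'.2.2.1 * h₁)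
          (by linear_combination P'.2.2.2 * h₂ - P.2.2.2 * h₂')
          (by linear_combination P.2.2.1 * h₂' - P'.2.2.1 * h₂)))
      exact eq_of_mem_primitivePoints_of_y_eq ha hκ hX hP hP' hy₁ hy₂
    · refine Or.inl ?_
      rintro P ⟨hP, h₁, h₂⟩ P' ⟨hP', h₁', h₂'⟩
      obtain ⟨hx₁, hx₂⟩ := eq_and_eq_of_isCoprime_of_mul_eq_mul hP.1.isCoprime_x hP'.1.isCoprime_x
        hP.1.x₂_pos hP'.1.x₂_pos (sub_eq_zero.mp (eq_zero_of_smul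
          (by linear_combination P'.2.1 * h₁ - P.2.1 * h₁')
          (by linear_combination P'.2.1 * h₂ - P.2.1 * h₂')
          (by linear_combination P.1 * h₁' - P'.1 * h₁)
          (by linear_combination P.1 * h₂' - P'.1 * h₂)))
      exact eq_of_mem_primitivePoints_of_x_eq ha hκ hY hP hP' hx₁ hx₂
  · rintro P ⟨hP, h⟩
    simp only [Finset.mem_insert, Finset.mem_singleton, exists_eq_or_imp, exists_eq_left]
    exact (eq_zero_or_eq_zero_of_det_eq_zero hΔ h).imp (And.intro hP) (And.intro hP)

end Hyperplane

section Cover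

variable {a₁ a₂ q κ : ℤ} {X₁ X₂ Y₁ Y₂ H D : ℝ}

lemma abs_tensor_le {P : ℤ⁴} (hP : P ∈ primitivePoints a₁ a₂ q κ X₁ X₂ Y₁ Y₂) (j : Fin 4) :
    |(tensor P j : ℝ)| ≤ ![X₁ * Y₁, X₁ * Y₂, X₂ * Y₁, X₂ * Y₂] j := by
  obtain ⟨hP, hx₁, hx₂, hy₁, hy₂⟩ := hP
  have abs_mul_le {x y : ℤ} {X Y : ℝ} (hx : 0 < x) (hy : 0 < y) (hxX : x ≤ X) (hyY : y ≤ Y) :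
      |((x * y : ℤ) : ℝ)| ≤ X * Y := by
    rw [abs_of_pos (mod_cast mul_pos hx hy), Int.cast_mul]
    exact mul_le_mul hxX hyY (mod_cast hy.le) ((Int.cast_nonneg hx.le).trans hxX)
  fin_cases j
  · exact abs_mul_le hP.x₁_pos hP.y₁_pos hx₁ hy₁
  · exact abs_mul_le hP.x₁_pos hP.y₂_pos hx₁ hy₂
  · exact abs_mul_le hP.x₂_pos hP.y₁_pos hx₂ hy₁
  · exact abs_mul_le hP.x₂_pos hP.y₂_pos hx₂ hy₂

lemma coverableBy_primitivePoints (hq : 0 < q) (ha : IsCoprime q (a₁ * a₂)) (hκ : IsCoprime q κ)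
    (hX : 4 * (X₁ * X₂) < (q : ℝ) ^ 3) (hY : 9 * (Y₁ * Y₂) < (q : ℝ) ^ 3) (hH : 1 ≤ H)
    (hWH : ∀ j, 2 ^ 11 * H ≤ ![X₁ * Y₁, X₁ * Y₂, X₂ * Y₁, X₂ * Y₂] j)
    (hprod : ∏ j, ![X₁ * Y₁, X₁ * Y₂, X₂ * Y₁, X₂ * Y₂] j ≤ 2 ^ 16 * (q : ℝ) ^ 6 * H ^ 3)
    (hD : 2 ≤ D) (hdivisors : ∀ c : Fin 4 → ℤ, (∀ j, |c j| ≤ q ^ 3) →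
      ((c 0 * c 3 - c 1 * c 2).divisors.card * (q ^ 3).natAbs.divisors.card : ℝ) ≤ D) :
    CoverableBy (IsCoveringPiece a₁ a₂ q κ) (primitivePoints a₁ a₂ q κ X₁ X₂ Y₁ Y₂)
      (25 ^ 4 * 2 ^ 13 * H * D) := by
  have ha₁ := ha.of_mul_right_left
  obtain ⟨𝓗, hcard, h𝓗, hcover⟩ := exists_hyperplane_cover_congruenceLattice (a₁ := a₁) (κ := κ)
    hq ha.of_mul_right_right hH hWH hprod
  refine (CoverableBy.biUnion (I := 𝓗) (N := D)
    (f := fun c => {P ∈ primitivePoints a₁ a₂ q κ X₁ X₂ Y₁ Y₂ | c ⬝ᵥ tensor P = 0})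
    fun c hc => ?_).mono (fun P hP => ?_) (by gcongr)
  · by_cases hΔ : c 0 * c 3 - c 1 * c 2 = 0
    · exact (coverableBy_of_det_eq_zero ha hκ hX hY (h𝓗 c hc).1 hΔ).mono subset_rfl hD
    · exact (coverableBy_of_det_ne_zero hq.ne' ha₁ hκ hΔ).mono subset_rfl
        (hdivisors c (h𝓗 c hc).2)
  · obtain ⟨-, -, htensor⟩ :=
      (congs_iff_tensor_mem_congruenceLattice hq.ne').mp (hP.1.congs hq.ne' ha₁ hκ)
    obtain ⟨c, hc, hcP⟩ := hcover _ htensor (abs_tensor_le hP)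
    exact Set.mem_biUnion hc ⟨hP, hcP⟩

lemma coverableBy_primitivePoints_of_le {N : ℕ} (hX₁ : X₁ ≤ N) (hX₂ : X₂ ≤ N) (hY₁ : Y₁ ≤ N)
    (hY₂ : Y₂ ≤ N) :
    CoverableBy (IsCoveringPiece a₁ a₂ q κ) (primitivePoints a₁ a₂ q κ X₁ X₂ Y₁ Y₂)
      ((N : ℝ) ^ 4) := by
  set box := Finset.Icc 1 (N : ℤ)
  refine (CoverableBy.of_singletons (box ×ˢ box ×ˢ box ×ˢ box)
    fun P => Or.inl Set.subsingleton_singleton).mono ?_ (le_of_eq ?_)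
  · rintro P ⟨hP, hx₁, hx₂, hy₁, hy₂⟩
    have mem_box {x : ℤ} {X : ℝ} (hx : 0 < x) (hxX : x ≤ X) (hXN : X ≤ N) : x ∈ box :=
      Finset.mem_Icc.mpr ⟨hx, mod_cast hxX.trans hXN⟩
    simp only [Finset.coe_product, Set.mem_prod, Finset.mem_coe]
    exact ⟨mem_box hP.x₁_pos hx₁ hX₁, mem_box hP.x₂_pos hx₂ hX₂, mem_box hP.y₁_pos hy₁ hY₁,
      mem_box hP.y₂_pos hy₂ hY₂⟩
  · simp only [box, Finset.card_product, Int.card_Icc, add_sub_cancel_right, Int.toNat_natCast]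
    push_cast
    ring

end Cover

section DivisorProduct

lemma card_int_divisors (n : ℤ) : n.divisors.card = 2 * n.natAbs.divisors.card := by
  rw [Int.divisors, Finset.card_disjUnion, Finset.card_map, Finset.card_map, two_mul]

variable {q : ℤ} {c : Fin 4 → ℤ}

lemma abs_det_le (hc : ∀ j, |c j| ≤ q ^ 3) : |c 0 * c 3 - c 1 * c 2| ≤ 2 * q ^ 6 := by
  have abs_mul_le (i j : Fin 4) : |c i * c j| ≤ q ^ 6 := calc
    |c i * c j| = |c i| * |c j| := abs_mul _ _
    _ ≤ q ^ 3 * q ^ 3 := mul_le_mul (hc i) (hc j) (abs_nonneg _) ((abs_nonneg _).trans (hc i))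
    _ = q ^ 6 := by ring
  linarith [abs_sub (c 0 * c 3) (c 1 * c 2), abs_mul_le 0 3, abs_mul_le 1 2]

lemma exists_card_divisors_mul_card_divisors_le {ε : ℝ} (hε : 0 < ε) :
    ∃ K : ℝ, 2 ≤ K ∧ ∀ (q : ℤ) (B : ℝ), 0 < q → q ≤ B → ∀ c : Fin 4 → ℤ, (∀ j, |c j| ≤ q ^ 3) →
      ((c 0 * c 3 - c 1 * c 2).divisors.card * (q ^ 3).natAbs.divisors.card : ℝ) ≤ K * B ^ ε := by
  obtain ⟨C, hC, hdivisors⟩ := exists_card_divisors_le_mul_rpow (show 0 < ε / 9 by positivity)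
  have h2 : (1 : ℝ) ≤ 2 ^ (ε / 9) := Real.one_le_rpow one_le_two (by positivity)
  refine ⟨2 * (C * C * 2 ^ (ε / 9)), by nlinarith [one_le_mul_of_one_le_of_one_le hC hC],
    fun q B hq hqB c hc => ?_⟩
  have hq' : (0 : ℝ) < q := mod_cast hq
  have hcube : ((q ^ 3).natAbs.divisors.card : ℝ) ≤ C * (q ^ 3) ^ (ε / 9) := by
    convert hdivisors (q ^ 3).natAbs (by positivity)
    rw [Nat.cast_natAbs, abs_of_pos (by positivity), Int.cast_pow]
  have hdet : ((c 0 * c 3 - c 1 * c 2).natAbs.divisors.card : ℝ) ≤ C * (2 * q ^ 6) ^ (ε / 9) := by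
    by_cases hΔ : c 0 * c 3 - c 1 * c 2 = 0
    · simp only [hΔ, Int.natAbs_zero, Nat.divisors_zero, Finset.card_empty, Nat.cast_zero]
      positivity
    · refine (hdivisors _ (Int.natAbs_ne_zero.mpr hΔ)).trans ?_
      gcongr
      rw [Nat.cast_natAbs]
      exact_mod_cast abs_det_le hc
  have hpow : (2 * (q : ℝ) ^ 6) ^ (ε / 9) * (q ^ 3) ^ (ε / 9) = 2 ^ (ε / 9) * q ^ ε := by
    rw [← Real.mul_rpow (by positivity) (by positivity), mul_assoc, ← pow_add,
      Real.mul_rpow (by positivity) (by positivity), ← Real.rpow_natCast, ← Real.rpow_mul hq'.le]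
    congr 2
    norm_num
    ring
  calc ((c 0 * c 3 - c 1 * c 2).divisors.card * (q ^ 3).natAbs.divisors.card : ℝ)
      = 2 * ((c 0 * c 3 - c 1 * c 2).natAbs.divisors.card * (q ^ 3).natAbs.divisors.card) := by
        rw [card_int_divisors, Nat.cast_mul, Nat.cast_ofNat, mul_assoc]
    _ ≤ 2 * (C * (2 * q ^ 6) ^ (ε / 9) * (C * (q ^ 3) ^ (ε / 9))) := by gcongr
    _ = 2 * (C * C * 2 ^ (ε / 9)) * q ^ ε := by linear_combination 2 * C * C * hpow
    _ ≤ 2 * (C * C * 2 ^ (ε / 9)) * B ^ ε := by gcongr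

end DivisorProduct

/-! ### Size of the parameters -/

/-- The quantity `(Y₁Y₂)^{-1/3} Y₃^{-2} B^{2/3}`, which is the claimed bound up to a factor
`C(ε) B^ε`. -/
noncomputable def latticeBound (B Y₁ Y₂ Y₃ : ℝ) : ℝ :=
  (Y₁ * Y₂) ^ (-(1 : ℝ) / 3) * Y₃ ^ (-2 : ℝ) * B ^ ((2 : ℝ) / 3)

lemma latticeBound_pow_three_mul {B Y₁ Y₂ Y₃ : ℝ} (hB : 0 ≤ B) (hY₁ : 0 < Y₁) (hY₂ : 0 < Y₂)
    (hY₃ : 0 < Y₃) : latticeBound B Y₁ Y₂ Y₃ ^ 3 * (Y₁ * Y₂ * Y₃ ^ 6) = B ^ 2 := by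
  have rpow_pow_three {x e : ℝ} {n : ℤ} (hx : 0 ≤ x) (he : e * 3 = n) : (x ^ e) ^ 3 = x ^ n := by
    rw [← Real.rpow_mul_natCast hx, Nat.cast_ofNat, he, Real.rpow_intCast]
  rw [latticeBound, mul_pow, mul_pow, rpow_pow_three (n := -1) (by positivity) (by norm_num),
    rpow_pow_three (n := -6) hY₃.le (by norm_num), rpow_pow_three (n := 2) hB (by norm_num)]
  field_simp

/-- The ranges of the parameters `Xᵢ` and `Yᵢ` in terms of `t = B^{1/180}`, which makes all the
exponents `1/5 ± 1/60` and `1/5 ± 1/90` integers. -/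
structure IsBalancedBox (t X₁ X₂ Y₁ Y₂ Y₃ : ℝ) : Prop where
  one_le : 1 ≤ t
  height₁ : X₁ ^ 2 * Y₁ ^ 3 ≤ 32 * t ^ 180
  height₂ : X₂ ^ 2 * Y₂ ^ 3 ≤ 32 * t ^ 180
  X₁_mem : X₁ ∈ Set.Icc (t ^ 33) (t ^ 39)
  X₂_mem : X₂ ∈ Set.Icc (t ^ 33) (t ^ 39)
  Y₁_mem : Y₁ ∈ Set.Icc (t ^ 34) (t ^ 38)
  Y₂_mem : Y₂ ∈ Set.Icc (t ^ 34) (t ^ 38)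
  Y₃_mem : Y₃ ∈ Set.Icc (t ^ 34) (t ^ 38)

namespace IsBalancedBox

variable {t X₁ X₂ Y₁ Y₂ Y₃ : ℝ}

lemma t_pos (h : IsBalancedBox t X₁ X₂ Y₁ Y₂ Y₃) : 0 < t := zero_lt_one.trans_le h.one_le

lemma X₂_pos (h : IsBalancedBox t X₁ X₂ Y₁ Y₂ Y₃) : 0 < X₂ :=
  (pow_pos h.t_pos _).trans_le h.X₂_mem.1

lemma Y₁_pos (h : IsBalancedBox t X₁ X₂ Y₁ Y₂ Y₃) : 0 < Y₁ :=
  (pow_pos h.t_pos _).trans_le h.Y₁_mem.1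

lemma Y₂_pos (h : IsBalancedBox t X₁ X₂ Y₁ Y₂ Y₃) : 0 < Y₂ :=
  (pow_pos h.t_pos _).trans_le h.Y₂_mem.1

lemma Y₃_pos (h : IsBalancedBox t X₁ X₂ Y₁ Y₂ Y₃) : 0 < Y₃ :=
  (pow_pos h.t_pos _).trans_le h.Y₃_mem.1

lemma latticeBound_pow_three_mul_eq (h : IsBalancedBox t X₁ X₂ Y₁ Y₂ Y₃) :
    latticeBound (t ^ 180) Y₁ Y₂ Y₃ ^ 3 * (Y₁ * Y₂ * Y₃ ^ 6) = t ^ 360 := by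
  rw [latticeBound_pow_three_mul (pow_nonneg h.t_pos.le _) h.Y₁_pos h.Y₂_pos h.Y₃_pos]
  ring

lemma latticeBound_pos (h : IsBalancedBox t X₁ X₂ Y₁ Y₂ Y₃) :
    0 < latticeBound (t ^ 180) Y₁ Y₂ Y₃ := by
  have := h.t_pos
  have := h.Y₁_pos
  have := h.Y₂_pos
  have := h.Y₃_pos
  unfold latticeBound
  positivity

lemma one_le_latticeBound (h : IsBalancedBox t X₁ X₂ Y₁ Y₂ Y₃) :
    1 ≤ latticeBound (t ^ 180) Y₁ Y₂ Y₃ := by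
  have hY : 0 < Y₁ * Y₂ * Y₃ ^ 6 := mul_pos (mul_pos h.Y₁_pos h.Y₂_pos) (pow_pos h.Y₃_pos 6)
  refine (one_le_pow_iff_of_nonneg h.latticeBound_pos.le three_ne_zero).mp
    (le_of_mul_le_mul_right ?_ hY)
  have := h.t_pos
  have := h.Y₁_pos
  have := h.Y₃_pos
  calc 1 * (Y₁ * Y₂ * Y₃ ^ 6) ≤ t ^ 38 * t ^ 38 * (t ^ 38) ^ 6 := by
        rw [one_mul]
        gcongr
        exacts [h.Y₂_pos.le, h.Y₁_mem.2, h.Y₂_mem.2, h.Y₃_mem.2]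
    _ = t ^ 304 := by ring
    _ ≤ t ^ 360 := pow_le_pow_right₀ h.one_le (by norm_num)
    _ = latticeBound (t ^ 180) Y₁ Y₂ Y₃ ^ 3 * (Y₁ * Y₂ * Y₃ ^ 6) :=
        h.latticeBound_pow_three_mul_eq.symm

lemma latticeBound_le (h : IsBalancedBox t X₁ X₂ Y₁ Y₂ Y₃) :
    latticeBound (t ^ 180) Y₁ Y₂ Y₃ ≤ t ^ 30 := by
  have := h.t_pos
  have := h.Y₁_pos
  have := h.Y₂_pos
  have := h.latticeBound_pos
  refine (pow_le_pow_iff_left₀ this.le (by positivity) three_ne_zero).mp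
    (le_of_mul_le_mul_right ?_ (pow_pos h.t_pos 272))
  calc latticeBound (t ^ 180) Y₁ Y₂ Y₃ ^ 3 * t ^ 272
      = latticeBound (t ^ 180) Y₁ Y₂ Y₃ ^ 3 * (t ^ 34 * t ^ 34 * (t ^ 34) ^ 6) := by ring
    _ ≤ latticeBound (t ^ 180) Y₁ Y₂ Y₃ ^ 3 * (Y₁ * Y₂ * Y₃ ^ 6) := by
        gcongr
        exacts [h.Y₁_mem.1, h.Y₂_mem.1, h.Y₃_mem.1]
    _ = t ^ 360 := h.latticeBound_pow_three_mul_eq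
    _ ≤ t ^ 362 := pow_le_pow_right₀ h.one_le (by norm_num)
    _ = (t ^ 30) ^ 3 * t ^ 272 := by ring

lemma mul_latticeBound_le (h : IsBalancedBox t X₁ X₂ Y₁ Y₂ Y₃) (ht : 2 ≤ t) (j : Fin 4) :
    2 ^ 11 * latticeBound (t ^ 180) Y₁ Y₂ Y₃ ≤ ![X₁ * Y₁, X₁ * Y₂, X₂ * Y₁, X₂ * Y₂] j := by
  have := h.t_pos
  have := h.latticeBound_pos
  have le_mul {X Y : ℝ} (hX : t ^ 33 ≤ X) (hY : t ^ 34 ≤ Y) :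
      2 ^ 11 * latticeBound (t ^ 180) Y₁ Y₂ Y₃ ≤ X * Y := calc
    2 ^ 11 * latticeBound (t ^ 180) Y₁ Y₂ Y₃ ≤ t ^ 11 * t ^ 30 := by
        gcongr
        exact h.latticeBound_le
    _ = t ^ 41 := by ring
    _ ≤ t ^ 67 := pow_le_pow_right₀ h.one_le (by norm_num)
    _ = t ^ 33 * t ^ 34 := by ring
    _ ≤ X * Y := mul_le_mul hX hY (by positivity) ((pow_pos h.t_pos 33).le.trans hX)
  fin_cases j
  · exact le_mul h.X₁_mem.1 h.Y₁_mem.1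
  · exact le_mul h.X₁_mem.1 h.Y₂_mem.1
  · exact le_mul h.X₂_mem.1 h.Y₁_mem.1
  · exact le_mul h.X₂_mem.1 h.Y₂_mem.1

variable {q : ℤ}

lemma prod_le (h : IsBalancedBox t X₁ X₂ Y₁ Y₂ Y₃) (hq : Y₃ ≤ 2 * q) :
    ∏ j, ![X₁ * Y₁, X₁ * Y₂, X₂ * Y₁, X₂ * Y₂] j ≤
      2 ^ 16 * (q : ℝ) ^ 6 * latticeBound (t ^ 180) Y₁ Y₂ Y₃ ^ 3 := by
  have := h.t_pos
  have := h.Y₁_pos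
  have := h.Y₂_pos
  have := h.Y₃_pos
  have := h.latticeBound_pos
  rw [Fin.prod_univ_four]
  refine le_of_mul_le_mul_left ?_ (mul_pos h.Y₁_pos h.Y₂_pos)
  calc Y₁ * Y₂ * (X₁ * Y₁ * (X₁ * Y₂) * (X₂ * Y₁) * (X₂ * Y₂))
      = X₁ ^ 2 * Y₁ ^ 3 * (X₂ ^ 2 * Y₂ ^ 3) := by ring
    _ ≤ 32 * t ^ 180 * (32 * t ^ 180) :=
        mul_le_mul h.height₁ h.height₂ (by positivity) (by positivity)
    _ = 2 ^ 10 * (latticeBound (t ^ 180) Y₁ Y₂ Y₃ ^ 3 * (Y₁ * Y₂ * Y₃ ^ 6)) := by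
        rw [h.latticeBound_pow_three_mul_eq]
        ring
    _ ≤ 2 ^ 10 * (latticeBound (t ^ 180) Y₁ Y₂ Y₃ ^ 3 * (Y₁ * Y₂ * (2 * q) ^ 6)) := by gcongr
    _ = Y₁ * Y₂ * (2 ^ 16 * (q : ℝ) ^ 6 * latticeBound (t ^ 180) Y₁ Y₂ Y₃ ^ 3) := by ring

lemma pow_le_cube (h : IsBalancedBox t X₁ X₂ Y₁ Y₂ Y₃) (ht : 2 ≤ t) (hq : Y₃ ≤ 2 * q) :
    2 ^ 21 * t ^ 78 ≤ (q : ℝ) ^ 3 := by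
  have := h.t_pos
  refine le_of_mul_le_mul_left ?_ (by norm_num : (0 : ℝ) < 2 ^ 3)
  calc 2 ^ 3 * (2 ^ 21 * t ^ 78) = 2 ^ 24 * t ^ 78 := by ring
    _ ≤ t ^ 24 * t ^ 78 := by gcongr
    _ = (t ^ 34) ^ 3 := by ring
    _ ≤ (2 * q) ^ 3 := by
        gcongr
        exact h.Y₃_mem.1.trans hq
    _ = 2 ^ 3 * (q : ℝ) ^ 3 := by ring

lemma X_mul_lt (h : IsBalancedBox t X₁ X₂ Y₁ Y₂ Y₃) (ht : 2 ≤ t) (hq : Y₃ ≤ 2 * q) :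
    4 * (X₁ * X₂) < (q : ℝ) ^ 3 := by
  have := pow_pos h.t_pos 78
  have := mul_le_mul h.X₁_mem.2 h.X₂_mem.2 h.X₂_pos.le (pow_pos h.t_pos 39).le
  linarith [h.pow_le_cube ht hq]

lemma Y_mul_lt (h : IsBalancedBox t X₁ X₂ Y₁ Y₂ Y₃) (ht : 2 ≤ t) (hq : Y₃ ≤ 2 * q) :
    9 * (Y₁ * Y₂) < (q : ℝ) ^ 3 := by
  have := pow_pos h.t_pos 78
  have := mul_le_mul h.Y₁_mem.2 h.Y₂_mem.2 h.Y₂_pos.le (pow_pos h.t_pos 38).le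
  have : t ^ 76 ≤ t ^ 78 := pow_le_pow_right₀ h.one_le (by norm_num)
  linarith [h.pow_le_cube ht hq]

end IsBalancedBox

namespace IsBalancedBox

variable {t X₁ X₂ Y₁ Y₂ Y₃ : ℝ} {a₁ a₂ q κ : ℤ}

lemma coverableBy_of_two_le (h : IsBalancedBox t X₁ X₂ Y₁ Y₂ Y₃) (ht : 2 ≤ t) (hqY : Y₃ < 2 * q)
    (ha : IsCoprime q (a₁ * a₂)) (hκ : IsCoprime κ q) {D : ℝ} (hD : 2 ≤ D)
    (hdivisors : ∀ c : Fin 4 → ℤ, (∀ j, |c j| ≤ q ^ 3) →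
      ((c 0 * c 3 - c 1 * c 2).divisors.card * (q ^ 3).natAbs.divisors.card : ℝ) ≤ D) :
    CoverableBy (IsCoveringPiece a₁ a₂ q κ) (primitivePoints a₁ a₂ q κ X₁ X₂ Y₁ Y₂)
      (25 ^ 4 * 2 ^ 13 * latticeBound (t ^ 180) Y₁ Y₂ Y₃ * D) := by
  have hq : (0 : ℝ) < q := by linarith [h.Y₃_pos]
  exact coverableBy_primitivePoints (mod_cast hq) ha hκ.symm (h.X_mul_lt ht hqY.le)
    (h.Y_mul_lt ht hqY.le) h.one_le_latticeBound (h.mul_latticeBound_le ht) (h.prod_le hqY.le) hD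
    hdivisors

lemma coverableBy_of_le_two (h : IsBalancedBox t X₁ X₂ Y₁ Y₂ Y₃) (ht : t ≤ 2) :
    CoverableBy (IsCoveringPiece a₁ a₂ q κ) (primitivePoints a₁ a₂ q κ X₁ X₂ Y₁ Y₂) (2 ^ 156) := by
  have hX : t ^ 39 ≤ (2 ^ 39 : ℕ) := by
    rw [Nat.cast_pow, Nat.cast_ofNat]
    exact pow_le_pow_left₀ h.t_pos.le ht 39
  have hY : t ^ 38 ≤ (2 ^ 39 : ℕ) := (pow_le_pow_right₀ h.one_le (by norm_num)).trans hX
  exact (coverableBy_primitivePoints_of_le (h.X₁_mem.2.trans hX) (h.X₂_mem.2.trans hX)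
    (h.Y₁_mem.2.trans hY) (h.Y₂_mem.2.trans hY)).mono subset_rfl (by norm_num)

end IsBalancedBox

lemma exists_coverableBy_primitivePoints {ε : ℝ} (hε : 0 < ε) :
    ∃ C : ℝ, 0 < C ∧ ∀ (a₁ a₂ q κ : ℤ) (t X₁ X₂ Y₁ Y₂ Y₃ : ℝ), IsBalancedBox t X₁ X₂ Y₁ Y₂ Y₃ →
      Y₃ < 2 * q → q ≤ Y₃ → IsCoprime q (a₁ * a₂) → IsCoprime κ q →
        CoverableBy (IsCoveringPiece a₁ a₂ q κ) (primitivePoints a₁ a₂ q κ X₁ X₂ Y₁ Y₂)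
          (C * (latticeBound (t ^ 180) Y₁ Y₂ Y₃ * (t ^ 180) ^ ε)) := by
  obtain ⟨K, hK, hdivisors⟩ := exists_card_divisors_mul_card_divisors_le hε
  refine ⟨25 ^ 4 * 2 ^ 13 * K + 2 ^ 156, by positivity,
    fun a₁ a₂ q κ t X₁ X₂ Y₁ Y₂ Y₃ h hqY hqY' ha hκ => ?_⟩
  have hpow : 1 ≤ (t ^ 180) ^ ε := Real.one_le_rpow (one_le_pow₀ h.one_le) hε.le
  have hbound : 1 ≤ latticeBound (t ^ 180) Y₁ Y₂ Y₃ * (t ^ 180) ^ ε :=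
    one_le_mul_of_one_le_of_one_le h.one_le_latticeBound hpow
  rcases le_total t 2 with ht | ht
  · refine (h.coverableBy_of_le_two ht).mono subset_rfl ?_
    calc (2 : ℝ) ^ 156 ≤ 25 ^ 4 * 2 ^ 13 * K + 2 ^ 156 := by linarith
      _ ≤ _ := le_mul_of_one_le_right (by positivity) hbound
  · have hq : (0 : ℝ) < q := by linarith [h.Y₃_pos]
    have hqB : (q : ℝ) ≤ t ^ 180 :=
      hqY'.trans (h.Y₃_mem.2.trans (pow_le_pow_right₀ h.one_le (by norm_num)))
    have hD : 2 ≤ K * (t ^ 180) ^ ε := by nlinarith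
    refine (h.coverableBy_of_two_le ht hqY ha hκ hD
      (hdivisors q _ (mod_cast hq) hqB)).mono subset_rfl ?_
    linear_combination 2 ^ 156 * (zero_le_one.trans hbound)

lemma isBalancedBox_of_rpow_le {B : ℝ} (hB : 1 ≤ B) {a : Fin 3 → ℤ} {X Y : Fin 3 → ℝ}
    (ha : ∀ i, a i ≠ 0) (hXY : ∀ i, X i ^ 2 * Y i ^ 3 ≤ 32 * B / |(a i : ℝ)|)
    (hX : ∀ i, B ^ ((1 : ℝ) / 5 - 1 / 60) ≤ X i ∧ X i ≤ B ^ ((1 : ℝ) / 5 + 1 / 60))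
    (hY : ∀ i, B ^ ((1 : ℝ) / 5 - 1 / 90) ≤ Y i ∧ Y i ≤ B ^ ((1 : ℝ) / 5 + 1 / 90)) :
    IsBalancedBox (B ^ ((1 : ℝ) / 180)) (X 0) (X 1) (Y 0) (Y 1) (Y 2) := by
  have pow_eq {e : ℝ} {n : ℕ} (he : e = n / 180) : B ^ e = (B ^ ((1 : ℝ) / 180)) ^ n := by
    rw [← Real.rpow_mul_natCast (by linarith), he, one_div_mul_eq_div]
  have height (i : Fin 3) : X i ^ 2 * Y i ^ 3 ≤ 32 * (B ^ ((1 : ℝ) / 180)) ^ 180 := by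
    rw [← pow_eq (e := 1) (by norm_num), Real.rpow_one]
    refine (hXY i).trans (div_le_self (by linarith) ?_)
    exact_mod_cast Int.one_le_abs (ha i)
  rw [pow_eq (e := 1 / 5 - 1 / 60) (n := 33) (by norm_num),
    pow_eq (e := 1 / 5 + 1 / 60) (n := 39) (by norm_num)] at hX
  rw [pow_eq (e := 1 / 5 - 1 / 90) (n := 34) (by norm_num),
    pow_eq (e := 1 / 5 + 1 / 90) (n := 38) (by norm_num)] at hY
  exact ⟨Real.one_le_rpow hB (by norm_num), height 0, height 1, hX 0, hX 1, hY 0, hY 1, hY 2⟩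

theorem covering_by_lines_general {ε : ℝ} (hε : 0 < ε) :
    ∃ C : ℝ, 0 < C ∧ ∀ (a₁ a₂ q κ : ℤ) (B X₁ X₂ Y₁ Y₂ Y₃ : ℝ), 1 ≤ B →
      IsBalancedBox (B ^ ((1 : ℝ) / 180)) X₁ X₂ Y₁ Y₂ Y₃ → Y₃ / 2 < q → q ≤ Y₃ →
      IsCoprime q (a₁ * a₂) → IsCoprime κ q →
      ∀ S ⊆ primitivePoints a₁ a₂ q κ X₁ X₂ Y₁ Y₂,
        ∃ (S' : Set ℤ⁴) (L : Finset (Submodule ℤ ℤ⁴)),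
          S' ⊆ S ∧
          S'.ncard ≤
            C * (Y₁ * Y₂) ^ (-(1 : ℝ) / 3) * Y₃ ^ (-2 : ℝ) * B ^ ((2 : ℝ) / 3 + ε) ∧
          L.card ≤
            C * (Y₁ * Y₂) ^ (-(1 : ℝ) / 3) * Y₃ ^ (-2 : ℝ) * B ^ ((2 : ℝ) / 3 + ε) ∧
          (∀ P ∈ S \ S', ∃ M ∈ L, P ∈ M) ∧
          ∀ M ∈ L, IsCoveringLattice a₁ a₂ q κ M := by
  obtain ⟨C, hC, hcover⟩ := exists_coverableBy_primitivePoints hε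
  refine ⟨C, hC, fun a₁ a₂ q κ B X₁ X₂ Y₁ Y₂ Y₃ hB h hqY hqY' ha hκ S hS => ?_⟩
  have hroot : (B ^ ((1 : ℝ) / 180)) ^ 180 = B := by
    rw [← Real.rpow_mul_natCast (by linarith)]
    norm_num
  have hbound : latticeBound B Y₁ Y₂ Y₃ * B ^ ε =
      (Y₁ * Y₂) ^ (-(1 : ℝ) / 3) * Y₃ ^ (-2 : ℝ) * B ^ ((2 : ℝ) / 3 + ε) := by
    rw [latticeBound, Real.rpow_add (by linarith), ← mul_assoc]
  have hS' := (hcover a₁ a₂ q κ _ X₁ X₂ Y₁ Y₂ Y₃ h (by linarith) hqY' ha hκ).mono hS le_rfl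
  rw [hroot, hbound, ← mul_assoc, ← mul_assoc] at hS'
  exact hS'.exists_covering_lattices

/-- Covering `S(q, κ)` by lines: apart from a small exceptional set `S₀(q, κ)`, the set
`S(q, κ)` is covered by a small collection of rank-two lattices `𝖬 ⊂ ℤ⁴` on which the
congruences (c1)–(c4) hold identically; each lattice contains a point with
`a₁x₁²y₁³ + a₂x₂²y₂³ ≠ 0`, and no nonzero point of a lattice has `(x₁, x₂) = (0, 0)` or
`(y₁, y₂) = (0, 0)`. -/
theorem covering_by_lines (ε : ℝ) (hε : 0 < ε) :
    ∃ C : ℝ, 0 < C ∧ ∀ (a : Fin 3 → ℤ) (X Y : Fin 3 → ℝ) (B : ℝ),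
      2 ≤ B → (∀ i, a i ≠ 0) → (∀ i, Squarefree (a i)) →
      (∀ i j, i ≠ j → IsCoprime (a i) (a j)) →
      (∀ i, 1 ≤ X i) → (∀ i, 1 ≤ Y i) →
      (∀ i, X i ^ 2 * Y i ^ 3 ≤ 32 * B / |(a i : ℝ)|) →
      (∀ i, B ^ ((1 : ℝ) / 5 - 1 / 60) ≤ X i ∧ X i ≤ B ^ ((1 : ℝ) / 5 + 1 / 60)) →
      (∀ i, B ^ ((1 : ℝ) / 5 - 1 / 90) ≤ Y i ∧ Y i ≤ B ^ ((1 : ℝ) / 5 + 1 / 90)) →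
      ∀ q κ : ℤ, Squarefree q → Y 2 / 2 < (q : ℝ) → (q : ℝ) ≤ Y 2 →
        IsCoprime q (a 0 * a 1) → IsCoprime κ q →
        ∃ (S' : Set (ℤ × ℤ × ℤ × ℤ)) (L : Finset (Submodule ℤ (ℤ × ℤ × ℤ × ℤ))),
          S' ⊆ SqK a X Y q κ ∧
          (S'.ncard : ℝ) ≤
            C * (Y 0 * Y 1) ^ (-(1 : ℝ) / 3) * Y 2 ^ (-2 : ℝ) * B ^ ((2 : ℝ) / 3 + ε) ∧
          (L.card : ℝ) ≤
            C * (Y 0 * Y 1) ^ (-(1 : ℝ) / 3) * Y 2 ^ (-2 : ℝ) * B ^ ((2 : ℝ) / 3 + ε) ∧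
          (∀ p ∈ SqK a X Y q κ \ S', ∃ M ∈ L, p ∈ M) ∧
          (∀ M ∈ L, Module.finrank ℤ M = 2 ∧
            (∀ p : ℤ × ℤ × ℤ × ℤ, p ∈ M →
              Congs (a 0) (a 1) q κ p.1 p.2.1 p.2.2.1 p.2.2.2) ∧
            (∃ p : ℤ × ℤ × ℤ × ℤ, p ∈ M ∧
              a 0 * p.1 ^ 2 * p.2.2.1 ^ 3 + a 1 * p.2.1 ^ 2 * p.2.2.2 ^ 3 ≠ 0) ∧
            (∀ p : ℤ × ℤ × ℤ × ℤ, p ∈ M → p ≠ 0 →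
              (p.1, p.2.1) ≠ (0, 0) ∧ (p.2.2.1, p.2.2.2) ≠ (0, 0))) := by
  obtain ⟨C, hC, hcover⟩ := covering_by_lines_general hε
  refine ⟨C, hC, fun a X Y B hB ha _ _ _ _ hXY hX hY q κ _ hqY hqY' hqa hκ => ?_⟩
  have hB₁ : 1 ≤ B := by linarith
  obtain ⟨S', L, hS', hcard, hLcard, hcov, hL⟩ := hcover (a 0) (a 1) q κ B _ _ _ _ _ hB₁
    (isBalancedBox_of_rpow_le hB₁ ha hXY hX hY) hqY hqY' hqa hκ _
    (SqK_subset_primitivePoints (ha 2))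
  exact ⟨S', L, hS', hcard, hLcard, hcov, fun M hM =>
    ⟨(hL M hM).finrank_eq, (hL M hM).congs, (hL M hM).exists_form_ne_zero, (hL M hM).injective⟩⟩
end

section
/- There is an absolute constant C such that, with the notation of the context, the set S₁(B) of points (x₁, x₂, x₃, y₁, y₂, y₃) ∈ S₀(B) for which there exist nonzero rationals g and ν with a₂x₁ = ν(4a₁y₁ − 5g²a₂y₂) and a₁x₂ = νg³(5a₁y₁ − 4g²a₂y₂) satisfies #S₁(B) ≤ C · B^{1/2}. -/
/-!
Put `cᵢ = aᵢyᵢ` and `zᵢ = xᵢyᵢ`. A point of `S₀(B)` is then a primitive point of the conic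
`c₀z₀² + c₁z₁² + c₂z₂² = 0`, whose coefficients are squarefree and pairwise coprime. Write
`g = r / s` in lowest terms and set `u = s²c₀`, `v = r²c₁`. Eliminating `ν`, the two equations of
`S₁(B)` say that `s·u(4u - 5v) = k·z₀` and `r·v(5u - 4v) = k·z₁` for some integer `k ≠ 0`.
Inserted into the conic this gives `(u + v)(4u² - 7uv + 4v²)² = -c₂(k·z₂)²`, so `u + v` and `-c₂`
agree up to squares. As the `cᵢ` are squarefree and pairwise coprime, a parity argument shows that
`u` and `v` are coprime, and elimination yields `k ∣ 144`. Hence `u(4u - 5v)` and `v(5u - 4v)` are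
`O(max(z₀, z₁))`, and since these two forms have no common zero, so are `u²` and `v²`.

Conversely `(u, v)` determines the point: `y₀` and `y₁` are the squarefree parts of `u / a₀` and
`v / a₁`, the proportion `z₀ : z₁` depends only on `u, v, c₀, c₁`, and then the conic determines
`y₂` and `z₂`. So there are `O(max(X₀Y₀, X₁Y₁))` points, which is `O(B^(77/180))`.
-/

theorem dvd_of_sq_mul_eq_sq_mul {M : Type*} [CommRing M] [IsDomain M]
    [UniqueFactorizationMonoid M] {s t x y : M} (ht : t ≠ 0) (hx : Squarefree x)
    (h : s ^ 2 * x = t ^ 2 * y) : x ∣ y := by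
  obtain ⟨c, hc⟩ : t ∣ s * x :=
    (UniqueFactorizationMonoid.pow_dvd_pow_iff_dvd two_ne_zero).1
      ⟨y * x, by linear_combination x * h⟩
  have hc_sq : c ^ 2 = x * y :=
    mul_left_cancel₀ (pow_ne_zero 2 ht) (by linear_combination x * h - (s * x + t * c) * hc)
  have hxc : x ∣ c := (hx.dvd_pow_iff_dvd two_ne_zero).1 ⟨y, hc_sq⟩
  rw [← mul_dvd_mul_iff_left hx.ne_zero, ← hc_sq, sq]
  exact mul_dvd_mul hxc hxc

theorem eq_of_sq_mul_eq_sq_mul {s t x y : ℤ} (hs : s ≠ 0) (ht : t ≠ 0) (hx₀ : 0 < x) (hy₀ : 0 < y)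
    (hx : Squarefree x) (hy : Squarefree y) (h : s ^ 2 * x = t ^ 2 * y) : x = y :=
  Int.dvd_antisymm hx₀.le hy₀.le (dvd_of_sq_mul_eq_sq_mul ht hx h)
    (dvd_of_sq_mul_eq_sq_mul hs hy h.symm)

theorem eq_of_isCoprime_of_mul_eq_mul {x y x' y' : ℤ} (hx : 0 < x) (hx' : 0 < x')
    (hxy : IsCoprime x y) (hxy' : IsCoprime x' y') (h : x * y' = x' * y) : x = x' ∧ y = y' := by
  obtain rfl : x = x' := Int.dvd_antisymm hx.le hx'.le
    (hxy.dvd_of_dvd_mul_right ⟨y', h.symm⟩) (hxy'.dvd_of_dvd_mul_right ⟨y, h⟩)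
  exact ⟨rfl, (mul_left_cancel₀ hx.ne' h).symm⟩

theorem prime_mul_mul_sq_ne_mul_sq {M : Type*} [CommMonoidWithZero M] [IsCancelMulZero M]
    {p m n x y : M} (hp : Prime p) (hm : ¬p ∣ m) (hn : ¬p ∣ n) (hy : FiniteMultiplicity p y) :
    p * m * x ^ 2 ≠ n * y ^ 2 := by
  intro h
  have hpp : emultiplicity p p = 1 := by simpa using emultiplicity_pow_self_of_prime hp 1
  have h_mult := congrArg (emultiplicity p) h
  simp only [emultiplicity_mul hp, emultiplicity_pow hp, hpp, emultiplicity_eq_zero.2 hm,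
    emultiplicity_eq_zero.2 hn, hy.emultiplicity_eq_multiplicity] at h_mult
  cases hx : emultiplicity p x with
  | top =>
    rw [hx] at h_mult
    exact ENat.natCast_ne_top (2 * multiplicity p y) (by simpa using h_mult.symm)
  | coe k =>
    rw [hx] at h_mult
    norm_cast at h_mult
    omega

section PrincipalIdealDomain

variable {R : Type*} [CommRing R] [IsDomain R] [IsPrincipalIdealRing R] {r s c₀ c₁ c₂ w z : R}

theorem isCoprime_of_sq_mul_add_sq_mul_mul_sq_eq (hc₁ : Squarefree c₁) (hc : IsCoprime c₁ c₂)
    (hrs : IsCoprime r s) (hz : z ≠ 0)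
    (h : (s ^ 2 * c₀ + r ^ 2 * c₁) * w ^ 2 = c₂ * z ^ 2) : IsCoprime s c₁ := by
  -- A common prime divides `s²c₀ + r²c₁` exactly once, but the equation makes its exponent even.
  refine isCoprime_of_prime_dvd (fun h0 ↦ hc₁.ne_zero h0.2) fun p hp hps hpc₁ ↦ ?_
  have hpr : ¬p ∣ r := fun hpr ↦ hp.not_isUnit (hrs.isUnit_of_dvd' hpr hps)
  have hpc₂ : ¬p ∣ c₂ := fun hpc₂ ↦ hp.not_isUnit (hc.isUnit_of_dvd' hpc₁ hpc₂)
  obtain ⟨e, rfl⟩ := hps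
  obtain ⟨d, rfl⟩ := hpc₁
  have hpd : ¬p ∣ d := fun hpd ↦ hp.not_isUnit (hc₁ p (mul_dvd_mul_left p hpd))
  have hpm : ¬p ∣ p * (e ^ 2 * c₀) + r ^ 2 * d := by
    rw [dvd_add_right (dvd_mul_right _ _)]
    exact fun hdvd ↦ (hp.dvd_or_dvd hdvd).elim (hpr ∘ hp.dvd_of_dvd_pow) hpd
  exact prime_mul_mul_sq_ne_mul_sq hp hpm hpc₂ (.of_prime_left hp hz)
    (x := w) (by linear_combination h)

theorem isCoprime_sq_mul_sq_mul (hc₀ : Squarefree c₀) (hc₁ : Squarefree c₁)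
    (h01 : IsCoprime c₀ c₁) (h02 : IsCoprime c₀ c₂) (h12 : IsCoprime c₁ c₂)
    (hrs : IsCoprime r s) (hz : z ≠ 0)
    (h : (s ^ 2 * c₀ + r ^ 2 * c₁) * w ^ 2 = c₂ * z ^ 2) :
    IsCoprime (s ^ 2 * c₀) (r ^ 2 * c₁) := by
  have hs : IsCoprime s c₁ := isCoprime_of_sq_mul_add_sq_mul_mul_sq_eq hc₁ h12 hrs hz h
  have hr : IsCoprime r c₀ :=
    isCoprime_of_sq_mul_add_sq_mul_mul_sq_eq hc₀ h02 hrs.symm hz (by rwa [add_comm])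
  exact .mul_left (.mul_right hrs.symm.pow hs.pow_left) (.mul_right hr.symm.pow_right h01)

end PrincipalIdealDomain

theorem dvd_144_of_dvd_of_dvd {R : Type*} [CommRing R] {u v k : R} (huv : IsCoprime u v)
    (hu : k ∣ u ^ 2 * (4 * u - 5 * v)) (hv : k ∣ v ^ 2 * (5 * u - 4 * v)) : k ∣ 144 := by
  -- Bézout cofactors expressing `144u⁵` and `144v⁵` through the two cubic forms.
  have hu_pow : k ∣ 144 * u ^ 5 := by
    convert (hu.mul_right (36 * u ^ 2 + 45 * (u * v) - 100 * v ^ 2)).add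
      (hv.mul_right (125 * u ^ 2)) using 1
    ring
  have hv_pow : k ∣ 144 * v ^ 5 := by
    convert (hv.mul_right (100 * u ^ 2 - 45 * (u * v) - 36 * v ^ 2)).sub
      (hu.mul_right (125 * v ^ 2)) using 1
    ring
  obtain ⟨m, n, hmn⟩ := huv.pow (m := 5) (n := 5)
  convert (hu_pow.mul_right m).add (hv_pow.mul_right n) using 1
  linear_combination -144 * hmn

section LinearOrderedRing

variable {R : Type*} [CommRing R] [LinearOrder R] [IsStrictOrderedRing R] {u v t : R}

theorem sq_le_three_mul_of_abs_le_abs (h : |v| ≤ |u|) (hu : |u * (4 * u - 5 * v)| ≤ t)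
    (hv : |v * (5 * u - 4 * v)| ≤ t) : u ^ 2 ≤ 3 * t := by
  rcases le_or_gt (15 * (u * v)) (11 * u ^ 2) with hsmall | hlarge
  · linarith [(le_abs_self _).trans hu]
  · have hle : u * v ≤ u ^ 2 :=
      calc u * v ≤ |u| * |v| := (le_abs_self _).trans (abs_mul u v).le
        _ ≤ |u| * |u| := by gcongr
        _ = u ^ 2 := by rw [abs_mul_abs_self, sq]
    have hpos : 0 < u ^ 2 := by
      refine (sq_nonneg u).lt_of_ne' fun hu0 ↦ ?_
      linarith
    have hmul : 0 ≤ u ^ 2 * (v * (5 * u - 4 * v) - u ^ 2) :=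
      calc 0 ≤ (4 * (u * v) - u ^ 2) * (u ^ 2 - u * v) :=
            mul_nonneg (by linarith) (sub_nonneg.2 hle)
        _ = u ^ 2 * (v * (5 * u - 4 * v) - u ^ 2) := by ring
    linarith [nonneg_of_mul_nonneg_right hmul hpos, (le_abs_self _).trans hv]

theorem sq_le_and_sq_le_three_mul (hu : |u * (4 * u - 5 * v)| ≤ t)
    (hv : |v * (5 * u - 4 * v)| ≤ t) : u ^ 2 ≤ 3 * t ∧ v ^ 2 ≤ 3 * t := by
  rcases le_total |v| |u| with h | h
  · have hle := sq_le_three_mul_of_abs_le_abs h hu hv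
    exact ⟨hle, (sq_le_sq.2 h).trans hle⟩
  · have hle := sq_le_three_mul_of_abs_le_abs (t := t) h
      (by rwa [← abs_neg, ← mul_neg, neg_sub]) (by rwa [← abs_neg, ← mul_neg, neg_sub])
    exact ⟨(sq_le_sq.2 h).trans hle, hle⟩

end LinearOrderedRing

theorem ncard_le_four_mul_of_injOn {α : Type*} {S : Set α} {f g : α → ℤ} {t : ℝ} (ht : 0 ≤ t)
    (hinj : S.InjOn fun p ↦ (f p, g p)) (hf : ∀ p ∈ S, f p ≠ 0 ∧ (f p : ℝ) ^ 2 ≤ t)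
    (hg : ∀ p ∈ S, g p ≠ 0 ∧ (g p : ℝ) ^ 2 ≤ t) : (S.ncard : ℝ) ≤ 4 * t := by
  let n : ℕ := ⌊√t⌋₊
  let I : Finset ℤ := (Finset.Icc (-n : ℤ) n).erase 0
  have mem_I {m : ℤ} (hm : m ≠ 0 ∧ (m : ℝ) ^ 2 ≤ t) : m ∈ I := by
    have hle : m.natAbs ≤ n := Nat.le_floor (by
      rw [Nat.cast_natAbs, Int.cast_abs]; exact Real.abs_le_sqrt hm.2)
    simp only [I, Finset.mem_erase, Finset.mem_Icc]
    omega
  have card_I : I.card = 2 * n := by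
    have zero_mem : (0 : ℤ) ∈ Finset.Icc (-n : ℤ) n := Finset.mem_Icc.2 (by omega)
    rw [Finset.card_erase_of_mem zero_mem, Int.card_Icc]
    omega
  have hcard : S.ncard ≤ (I ×ˢ I).card := by
    rw [← Set.ncard_coe_finset]
    exact Set.ncard_le_ncard_of_injOn _
      (fun p hp ↦ Finset.mem_coe.2 (Finset.mk_mem_product (mem_I (hf p hp)) (mem_I (hg p hp)))) hinj
  calc (S.ncard : ℝ) ≤ (2 * n) * (2 * n) := by
        rw [Finset.card_product, card_I] at hcard
        exact_mod_cast hcard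
    _ ≤ (2 * √t) * (2 * √t) := by gcongr <;> exact Nat.floor_le (Real.sqrt_nonneg t)
    _ = 4 * t := by linear_combination 4 * Real.mul_self_sqrt ht

theorem mul_le_rpow_of_le_rpow {b x y α β γ : ℝ} (hb : 1 ≤ b) (hy : 0 ≤ y) (hxα : x ≤ b ^ α)
    (hyβ : y ≤ b ^ β) (hαβ : α + β ≤ γ) : x * y ≤ b ^ γ := by
  have hb₀ : 0 < b := one_pos.trans_le hb
  calc x * y ≤ b ^ α * b ^ β := by gcongr
    _ = b ^ (α + β) := (Real.rpow_add hb₀ α β).symm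
    _ ≤ b ^ γ := Real.rpow_le_rpow_of_exponent_le hb hαβ

/-- Integral points with positive pairwise coprime coordinates on a diagonal conic with pairwise
coprime squarefree coefficients. A point of `S₀(B)` becomes one through `cᵢ = aᵢyᵢ`, `zᵢ = xᵢyᵢ`,
since `aᵢxᵢ²yᵢ³ = cᵢzᵢ²`. -/
structure IsConicPoint (c z : Fin 3 → ℤ) : Prop where
  pos : ∀ i, 0 < z i
  squarefree : ∀ i, Squarefree (c i)
  isCoprime_coeff : Pairwise fun i j ↦ IsCoprime (c i) (c j)
  isCoprime_coord : Pairwise fun i j ↦ IsCoprime (z i) (z j)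
  eq_zero : c 0 * z 0 ^ 2 + c 1 * z 1 ^ 2 + c 2 * z 2 ^ 2 = 0

/-- The condition defining `S₁(B)` in the coordinates `cᵢ = aᵢyᵢ`, `zᵢ = xᵢyᵢ`, with `ν`
eliminated and `g = r / s` in lowest terms; the numbers `u = s²c₀` and `v = r²c₁` satisfy
`v / u = g²c₁ / c₀`. -/
structure IsExceptional (c z : Fin 3 → ℤ) (r s u v : ℤ) : Prop where
  num_ne_zero : r ≠ 0
  den_ne_zero : s ≠ 0
  isCoprime : IsCoprime r s
  u_eq : u = s ^ 2 * c 0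
  v_eq : v = r ^ 2 * c 1
  proportion : z 0 * (r * (v * (5 * u - 4 * v))) = z 1 * (s * (u * (4 * u - 5 * v)))

theorem IsExceptional.sq_proportion {c z : Fin 3 → ℤ} {r s u v : ℤ}
    (he : IsExceptional c z r s u v) :
    c 0 * (v ^ 3 * (5 * u - 4 * v) ^ 2) * z 0 ^ 2 =
      c 1 * (u ^ 3 * (4 * u - 5 * v) ^ 2) * z 1 ^ 2 := by
  obtain ⟨-, -, -, hu, hv, h⟩ := he
  calc c 0 * (v ^ 3 * (5 * u - 4 * v) ^ 2) * z 0 ^ 2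
      = c 0 * (z 0 * (v * (5 * u - 4 * v))) ^ 2 * (r ^ 2 * c 1) := by rw [← hv]; ring
    _ = c 0 * c 1 * (z 0 * (r * (v * (5 * u - 4 * v)))) ^ 2 := by ring
    _ = c 0 * c 1 * (z 1 * (s * (u * (4 * u - 5 * v)))) ^ 2 := by rw [h]
    _ = c 1 * (z 1 * (u * (4 * u - 5 * v))) ^ 2 * (s ^ 2 * c 0) := by ring
    _ = c 1 * (u ^ 3 * (4 * u - 5 * v) ^ 2) * z 1 ^ 2 := by rw [← hu]; ring

namespace IsConicPoint

variable {c z c' z' : Fin 3 → ℤ} {r s u v r' s' : ℤ}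

theorem u_ne_zero (hz : IsConicPoint c z) (he : IsExceptional c z r s u v) : u ≠ 0 := by
  rw [he.u_eq]
  exact mul_ne_zero (pow_ne_zero 2 he.den_ne_zero) (hz.squarefree 0).ne_zero

theorem v_ne_zero (hz : IsConicPoint c z) (he : IsExceptional c z r s u v) : v ≠ 0 := by
  rw [he.v_eq]
  exact mul_ne_zero (pow_ne_zero 2 he.num_ne_zero) (hz.squarefree 1).ne_zero

theorem forms_ne_zero (hz : IsConicPoint c z) (he : IsExceptional c z r s u v) :
    4 * u - 5 * v ≠ 0 ∧ 5 * u - 4 * v ≠ 0 := by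
  have h_iff : 4 * u - 5 * v = 0 ↔ 5 * u - 4 * v = 0 := by
    have := congrArg (· = 0) he.proportion
    simpa [(hz.pos 0).ne', (hz.pos 1).ne', he.num_ne_zero, he.den_ne_zero, hz.u_ne_zero he,
      hz.v_ne_zero he, eq_comm] using this
  have := hz.u_ne_zero he
  omega

theorem exists_multiplier (hz : IsConicPoint c z) (he : IsExceptional c z r s u v) :
    ∃ k, k ≠ 0 ∧ s * (u * (4 * u - 5 * v)) = k * z 0 ∧ r * (v * (5 * u - 4 * v)) = k * z 1 := by
  have hcop : IsCoprime (z 0) (z 1) := hz.isCoprime_coord (by decide)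
  obtain ⟨k, hk⟩ : z 0 ∣ s * (u * (4 * u - 5 * v)) :=
    hcop.dvd_of_dvd_mul_left ⟨_, he.proportion.symm⟩
  refine ⟨k, ?_, by rw [hk, mul_comm], mul_left_cancel₀ (hz.pos 0).ne' ?_⟩
  · rintro rfl
    rw [mul_zero] at hk
    exact mul_ne_zero he.den_ne_zero
      (mul_ne_zero (hz.u_ne_zero he) (hz.forms_ne_zero he).1) hk
  · linear_combination he.proportion + z 1 * hk

/-- The identity `u³(4u - 5v)² + v³(5u - 4v)² = (u + v)(4u² - 7uv + 4v²)²` turns the conic into an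
equation for `u + v`, to which the square class argument applies. -/
theorem isCoprime_uv (hz : IsConicPoint c z) (he : IsExceptional c z r s u v) :
    IsCoprime u v := by
  obtain ⟨k, hk, hu, hv⟩ := hz.exists_multiplier he
  have hsum : (u + v) * (4 * u ^ 2 - 7 * u * v + 4 * v ^ 2) ^ 2 = -c 2 * (k * z 2) ^ 2 :=
    calc (u + v) * (4 * u ^ 2 - 7 * u * v + 4 * v ^ 2) ^ 2
        = u * (u * (4 * u - 5 * v)) ^ 2 + v * (v * (5 * u - 4 * v)) ^ 2 := by ring
      _ = c 0 * (s * (u * (4 * u - 5 * v))) ^ 2 + c 1 * (r * (v * (5 * u - 4 * v))) ^ 2 := by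
        linear_combination (u * (4 * u - 5 * v)) ^ 2 * he.u_eq +
          (v * (5 * u - 4 * v)) ^ 2 * he.v_eq
      _ = -c 2 * (k * z 2) ^ 2 := by
        rw [hu, hv]
        linear_combination k ^ 2 * hz.eq_zero
  rw [he.u_eq, he.v_eq] at hsum ⊢
  exact isCoprime_sq_mul_sq_mul (hz.squarefree 0) (hz.squarefree 1)
    (hz.isCoprime_coeff (by decide)) (hz.isCoprime_coeff (by decide)).neg_right
    (hz.isCoprime_coeff (by decide)).neg_right he.isCoprime (mul_ne_zero hk (hz.pos 2).ne') hsum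

theorem sq_le_and_sq_le (hz : IsConicPoint c z) (he : IsExceptional c z r s u v) :
    u ^ 2 ≤ 432 * max (z 0) (z 1) ∧ v ^ 2 ≤ 432 * max (z 0) (z 1) := by
  obtain ⟨k, -, hu, hv⟩ := hz.exists_multiplier he
  have hk_dvd : k ∣ 144 := dvd_144_of_dvd_of_dvd (hz.isCoprime_uv he)
    ⟨s * c 0 * z 0, by linear_combination u * (4 * u - 5 * v) * he.u_eq + s * c 0 * hu⟩
    ⟨r * c 1 * z 1, by linear_combination v * (5 * u - 4 * v) * he.v_eq + r * c 1 * hv⟩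
  have hk_abs : |k| ≤ 144 := Int.le_of_dvd (by norm_num) ((abs_dvd _ _).2 hk_dvd)
  have abs_le_of_mul_eq {q w : ℤ} {i : Fin 3} (hq : q ≠ 0) (h : q * w = k * z i) :
      |w| ≤ 144 * z i :=
    calc |w| ≤ |q| * |w| := le_mul_of_one_le_left (abs_nonneg w) (Int.one_le_abs hq)
      _ = |k| * z i := by rw [← abs_mul, h, abs_mul, abs_of_pos (hz.pos i)]
      _ ≤ 144 * z i := mul_le_mul_of_nonneg_right hk_abs (hz.pos i).le
  have h := sq_le_and_sq_le_three_mul (t := 144 * max (z 0) (z 1))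
    ((abs_le_of_mul_eq he.den_ne_zero hu).trans (by gcongr; exact le_max_left _ _))
    ((abs_le_of_mul_eq he.num_ne_zero hv).trans (by gcongr; exact le_max_right _ _))
  rw [← mul_assoc] at h
  exact h

theorem coord_eq_of_exceptional (hz : IsConicPoint c z) (hz' : IsConicPoint c' z')
    (he : IsExceptional c z r s u v) (he' : IsExceptional c' z' r' s' u v) (h0 : c 0 = c' 0)
    (h1 : c 1 = c' 1) : z 0 = z' 0 ∧ z 1 = z' 1 := by
  have hprop := he.sq_proportion
  have hprop' := he'.sq_proportion
  rw [← h0, ← h1] at hprop'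
  obtain ⟨-, hform⟩ := hz.forms_ne_zero he
  have hcoeff : c 0 * (v ^ 3 * (5 * u - 4 * v) ^ 2) ≠ 0 :=
    mul_ne_zero (hz.squarefree 0).ne_zero
      (mul_ne_zero (pow_ne_zero 3 (hz.v_ne_zero he)) (pow_ne_zero 2 hform))
  have hsq : (z 0 * z' 1) ^ 2 = (z' 0 * z 1) ^ 2 :=
    mul_left_cancel₀ hcoeff (by linear_combination z' 1 ^ 2 * hprop - z 1 ^ 2 * hprop')
  exact eq_of_isCoprime_of_mul_eq_mul (hz.pos 0) (hz'.pos 0) (hz.isCoprime_coord (by decide))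
    (hz'.isCoprime_coord (by decide))
    ((sq_eq_sq₀ (mul_pos (hz.pos 0) (hz'.pos 1)).le (mul_pos (hz'.pos 0) (hz.pos 1)).le).1 hsq)

end IsConicPoint

theorem dvd_of_dvd_sum_of_dvd {R : Type*} [CommRing R] {t : Fin 3 → R} {q : R} {i j : Fin 3}
    (hij : i ≠ j) (hsum : q ∣ ∑ l, t l) (hi : q ∣ t i) (hj : q ∣ t j) (k : Fin 3) : q ∣ t k := by
  by_cases hki : k = i
  · rwa [hki]
  by_cases hkj : k = j
  · rwa [hkj]
  rw [← Finset.sum_erase_add _ _ (Finset.mem_univ k)] at hsum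
  refine (dvd_add_right (Finset.dvd_sum fun l hl ↦ ?_)).1 hsum
  obtain rfl | rfl : l = i ∨ l = j := by
    have := Finset.ne_of_mem_erase hl
    omega
  exacts [hi, hj]

section S0

variable {a : Fin 3 → ℤ} {X Y : Fin 3 → ℝ} {p p' : (Fin 3 → ℤ) × (Fin 3 → ℤ)}
  {r s u v r' s' : ℤ}

theorem isCoprime_coeff_coord_of_mem_S0 (hp : p ∈ S0 a X Y) (i j : Fin 3) :
    IsCoprime (a i) (p.1 j * p.2 j) := by
  obtain ⟨-, -, -, -, -, -, hgcd, -⟩ := hp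
  have hprod : IsCoprime (∏ k, a k) (∏ k, p.1 k * p.2 k) := by
    rw [Int.isCoprime_iff_gcd_eq_one, ← hgcd]
    congr 1 <;> simp only [Fin.prod_univ_three]
    ring
  exact (hprod.of_isCoprime_of_dvd_left (Finset.dvd_prod_of_mem a (Finset.mem_univ i)))
    |>.of_isCoprime_of_dvd_right (Finset.dvd_prod_of_mem _ (Finset.mem_univ j))

theorem isCoprime_coord_of_mem_S0 (hp : p ∈ S0 a X Y) {i j : Fin 3} (hij : i ≠ j) :
    IsCoprime (p.1 i * p.2 i) (p.1 j * p.2 j) := by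
  obtain ⟨hx, hy, -, -, heq, hgcd, -, -⟩ := id hp
  refine isCoprime_of_prime_dvd (fun h ↦ (mul_pos (hx i) (hy i)).ne' h.1) fun q hq hqi hqj ↦ ?_
  have dvd_term {k : Fin 3} (hqk : q ∣ p.1 k * p.2 k) : q ∣ a k * p.1 k ^ 2 * p.2 k ^ 3 :=
    hqk.trans ⟨a k * p.1 k * p.2 k ^ 2, by ring⟩
  have hall (k : Fin 3) : q ∣ p.1 k * p.2 k := by
    have hk := dvd_of_dvd_sum_of_dvd (t := fun l ↦ a l * p.1 l ^ 2 * p.2 l ^ 3) hij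
      (by simp only [Fin.sum_univ_three, heq, dvd_zero]) (dvd_term hqi) (dvd_term hqj) k
    have hak : ¬q ∣ a k := fun h ↦
      hq.not_isUnit ((isCoprime_coeff_coord_of_mem_S0 hp k i).isUnit_of_dvd' h hqi)
    rcases hq.dvd_or_dvd hk with h | h
    · exact (hq.dvd_of_dvd_pow ((hq.dvd_or_dvd h).resolve_left hak)).mul_right _
    · exact (hq.dvd_of_dvd_pow h).mul_left _
  have hone := Int.dvd_coe_gcd (hall 0) (Int.dvd_coe_gcd (hall 1) (hall 2))
  rw [hgcd, Nat.cast_one] at hone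
  exact hq.not_isUnit (isUnit_of_dvd_one hone)

theorem isConicPoint_of_mem_S0 (ha : Pairwise fun i j ↦ IsCoprime (a i) (a j))
    (hp : p ∈ S0 a X Y) : IsConicPoint (a * p.2) (p.1 * p.2) where
  pos i := mul_pos (hp.1 i) (hp.2.1 i)
  squarefree := hp.2.2.2.2.2.2.2
  isCoprime_coord _ _ hij := isCoprime_coord_of_mem_S0 hp hij
  isCoprime_coeff i j hij :=
    have hay (k l : Fin 3) : IsCoprime (a k) (p.2 l) :=
      (isCoprime_coeff_coord_of_mem_S0 hp k l).of_mul_right_right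
    have hyy : IsCoprime (p.2 i) (p.2 j) :=
      (isCoprime_coord_of_mem_S0 hp hij).of_mul_left_right.of_mul_right_right
    .mul_left (.mul_right (ha hij) (hay i j)) (.mul_right (hay j i).symm hyy)
  eq_zero := by
    obtain ⟨-, -, -, -, heq, -⟩ := hp
    simp only [Pi.mul_apply]
    linear_combination heq

theorem eq_of_mem_S0_of_exceptional (ha : Pairwise fun i j ↦ IsCoprime (a i) (a j))
    (hp : p ∈ S0 a X Y) (hp' : p' ∈ S0 a X Y)
    (he : IsExceptional (a * p.2) (p.1 * p.2) r s u v)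
    (he' : IsExceptional (a * p'.2) (p'.1 * p'.2) r' s' u v) : p = p' := by
  have hz := isConicPoint_of_mem_S0 ha hp
  have hz' := isConicPoint_of_mem_S0 ha hp'
  have y_eq {i : Fin 3} {s t : ℤ} (hs : s ≠ 0) (ht : t ≠ 0)
      (h : s ^ 2 * (a * p.2) i = t ^ 2 * (a * p'.2) i) : p.2 i = p'.2 i :=
    eq_of_sq_mul_eq_sq_mul hs ht (hp.2.1 i) (hp'.2.1 i) (hz.squarefree i).of_mul_right
      (hz'.squarefree i).of_mul_right
      (mul_left_cancel₀ (left_ne_zero_of_mul (hz.squarefree i).ne_zero)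
        (by simp only [Pi.mul_apply] at h; linear_combination h))
  have hy0 := y_eq he.den_ne_zero he'.den_ne_zero (he.u_eq.symm.trans he'.u_eq)
  have hy1 := y_eq he.num_ne_zero he'.num_ne_zero (he.v_eq.symm.trans he'.v_eq)
  have hc0 : (a * p.2) 0 = (a * p'.2) 0 := congrArg (a 0 * ·) hy0
  have hc1 : (a * p.2) 1 = (a * p'.2) 1 := congrArg (a 1 * ·) hy1
  obtain ⟨hz0, hz1⟩ := hz.coord_eq_of_exceptional hz' he he' hc0 hc1
  have hcz2 : (p.1 * p.2) 2 ^ 2 * (a * p.2) 2 = (p'.1 * p'.2) 2 ^ 2 * (a * p'.2) 2 := by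
    have h' := hz'.eq_zero
    rw [← hz0, ← hz1, ← hc0, ← hc1] at h'
    linear_combination hz.eq_zero - h'
  have hy2 := y_eq (hz.pos 2).ne' (hz'.pos 2).ne' hcz2
  have hc2 : (a * p.2) 2 = (a * p'.2) 2 := congrArg (a 2 * ·) hy2
  have hz2 : (p.1 * p.2) 2 = (p'.1 * p'.2) 2 := by
    rw [hc2] at hcz2
    exact (sq_eq_sq₀ (hz.pos 2).le (hz'.pos 2).le).1
      (mul_right_cancel₀ (hz'.squarefree 2).ne_zero hcz2)
  have hy : p.2 = p'.2 := by ext i; fin_cases i; exacts [hy0, hy1, hy2]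
  have hxy : p.1 * p.2 = p'.1 * p'.2 := by ext i; fin_cases i; exacts [hz0, hz1, hz2]
  refine Prod.ext (funext fun i ↦ mul_right_cancel₀ (hp.2.1 i).ne' ?_) hy
  have := congrFun hxy i
  rwa [← hy] at this

end S0

/-- The set `S₁(B)` of exceptional points of `S₀(B)`. -/
def S1 (a : Fin 3 → ℤ) (X Y : Fin 3 → ℝ) : Set ((Fin 3 → ℤ) × (Fin 3 → ℤ)) :=
  {p ∈ S0 a X Y | ∃ g ν : ℚ, g ≠ 0 ∧ ν ≠ 0 ∧
    ((a 1 * p.1 0 : ℤ) : ℚ) =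
      ν * (4 * ((a 0 * p.2 0 : ℤ) : ℚ) - 5 * g ^ 2 * ((a 1 * p.2 1 : ℤ) : ℚ)) ∧
    ((a 0 * p.1 1 : ℤ) : ℚ) =
      ν * g ^ 3 * (5 * ((a 0 * p.2 0 : ℤ) : ℚ) - 4 * g ^ 2 * ((a 1 * p.2 1 : ℤ) : ℚ))}

theorem exists_isExceptional_of_mem_S1 {a : Fin 3 → ℤ} {X Y : Fin 3 → ℝ}
    {p : (Fin 3 → ℤ) × (Fin 3 → ℤ)} (hp : p ∈ S1 a X Y) :
    ∃ r s u v, IsExceptional (a * p.2) (p.1 * p.2) r s u v := by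
  obtain ⟨-, g, ν, hg, -, hx0, hx1⟩ := hp
  refine ⟨g.num, g.den, _, _, Rat.num_ne_zero.2 hg, by exact_mod_cast g.den_ne_zero,
    Rat.isCoprime_num_den g, rfl, rfl, ?_⟩
  have hnum : (g.num : ℚ) = g * g.den := (Rat.mul_den_eq_num g).symm
  simp only [Pi.mul_apply]
  qify at hx0 hx1 ⊢
  rw [hnum]
  linear_combination (g.den : ℚ) ^ 5 * p.2 0 * p.2 1 *
    (g ^ 3 * (5 * (a 0 * p.2 0) - 4 * g ^ 2 * (a 1 * p.2 1)) * hx0 -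
      (4 * (a 0 * p.2 0) - 5 * g ^ 2 * (a 1 * p.2 1)) * hx1)

theorem exceptional_points_bound_general {a : Fin 3 → ℤ} {X Y : Fin 3 → ℝ} {t : ℝ}
    (ha : Pairwise fun i j ↦ IsCoprime (a i) (a j)) (ht : 0 ≤ t) (h0 : X 0 * Y 0 ≤ t)
    (h1 : X 1 * Y 1 ≤ t) : ((S1 a X Y).ncard : ℝ) ≤ 1728 * t := by
  choose! r s u v he using fun p (hp : p ∈ S1 a X Y) ↦ exists_isExceptional_of_mem_S1 hp
  have hz {p} (hp : p ∈ S1 a X Y) := isConicPoint_of_mem_S0 ha hp.1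
  have hle {p} (hp : p ∈ S1 a X Y) :
      ((max (p.1 0 * p.2 0) (p.1 1 * p.2 1) : ℤ) : ℝ) ≤ t := by
    obtain ⟨-, hy, hX, hY, -⟩ := hp.1
    have hxy (i) : (p.1 i * p.2 i : ℝ) ≤ X i * Y i :=
      mul_le_mul (hX i).2 (hY i).2 (mod_cast (hy i).le) (by linarith [(hX i).1, (hX i).2])
    push_cast
    exact max_le ((hxy 0).trans h0) ((hxy 1).trans h1)
  have hsq {p} (hp : p ∈ S1 a X Y) {w : ℤ}
      (hw : w ^ 2 ≤ 432 * max (p.1 0 * p.2 0) (p.1 1 * p.2 1)) : (w : ℝ) ^ 2 ≤ 432 * t :=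
    calc (w : ℝ) ^ 2 ≤ 432 * ((max (p.1 0 * p.2 0) (p.1 1 * p.2 1) : ℤ) : ℝ) := mod_cast hw
      _ ≤ 432 * t := by gcongr; exact hle hp
  have hinj : (S1 a X Y).InjOn fun p ↦ (u p, v p) := by
    intro p hp p' hp' h
    obtain ⟨hu, hv⟩ := Prod.mk.inj h
    exact eq_of_mem_S0_of_exceptional ha hp.1 hp'.1 (he p hp) (hu ▸ hv ▸ he p' hp')
  have hcard := ncard_le_four_mul_of_injOn (by positivity) hinj
    (fun p hp ↦ ⟨(hz hp).u_ne_zero (he p hp), hsq hp ((hz hp).sq_le_and_sq_le (he p hp)).1⟩)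
    (fun p hp ↦ ⟨(hz hp).v_ne_zero (he p hp), hsq hp ((hz hp).sq_le_and_sq_le (he p hp)).2⟩)
  linarith

/-- There is an absolute constant `C` such that the set `S₁(B)` of points
`(x₁, x₂, x₃, y₁, y₂, y₃) ∈ S₀(B)` for which there exist nonzero rationals `g, ν` with
`a₂x₁ = ν(4a₁y₁ − 5g²a₂y₂)` and `a₁x₂ = νg³(5a₁y₁ − 4g²a₂y₂)` satisfies `#S₁(B) ≤ CB^{1/2}`. -/
theorem exceptional_points_bound :
    ∃ C : ℝ, 0 < C ∧ ∀ (a : Fin 3 → ℤ) (X Y : Fin 3 → ℝ) (B : ℝ),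
      2 ≤ B → (∀ i, a i ≠ 0) → (∀ i, Squarefree (a i)) →
      (∀ i j, i ≠ j → IsCoprime (a i) (a j)) →
      (∀ i, 1 ≤ X i) → (∀ i, 1 ≤ Y i) →
      (∀ i, X i ^ 2 * Y i ^ 3 ≤ 32 * B / |(a i : ℝ)|) →
      (∀ i, B ^ ((1 : ℝ) / 5 - 1 / 60) ≤ X i ∧ X i ≤ B ^ ((1 : ℝ) / 5 + 1 / 60)) →
      (∀ i, B ^ ((1 : ℝ) / 5 - 1 / 90) ≤ Y i ∧ Y i ≤ B ^ ((1 : ℝ) / 5 + 1 / 90)) →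
        (({p ∈ S0 a X Y | ∃ g ν : ℚ, g ≠ 0 ∧ ν ≠ 0 ∧
            ((a 1 * p.1 0 : ℤ) : ℚ) =
              ν * (4 * ((a 0 * p.2 0 : ℤ) : ℚ) - 5 * g ^ 2 * ((a 1 * p.2 1 : ℤ) : ℚ)) ∧
            ((a 0 * p.1 1 : ℤ) : ℚ) =
              ν * g ^ 3 *
                (5 * ((a 0 * p.2 0 : ℤ) : ℚ) - 4 * g ^ 2 * ((a 1 * p.2 1 : ℤ) : ℚ))}).ncard
            : ℝ) ≤ C * B ^ ((1 : ℝ) / 2) :=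
  ⟨1728, by norm_num, fun _ _ _ _ hB _ _ ha _ hY _ hX' hY' ↦
    have hXY i := mul_le_rpow_of_le_rpow (by linarith) (zero_le_one.trans (hY i))
      (hX' i).2 (hY' i).2 (by norm_num)
    exceptional_points_bound_general (fun i j ↦ ha i j) (by positivity) (hXY 0) (hXY 1)⟩
end
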